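/- arXiv:1108.3181 — 5 statements merged into one kernel-verified Lean document; each statement's English description precedes it below -/
import Mathlib

section
/- Let λ > 0, h > 0 and set r^h := e^{−λh} ∈ (0,1). For 0 < a < ā define K^h(a|ā) := a·log a + (ā−a)·log(ā−a) − a·log r^h − (ā−a)·log(1−r^h). Fix a⁰ > 0 and define the sequence a^{h,0} := a⁰ and, for k ≥ 1, a^{h,k} := the unique minimiser of a ↦ K^h(a|a^{h,k−1}) over (0, a^{h,k−1}). Then a^{h,k} = a⁰·e^{−λkh} for every k ≥ 0, and consequently for every t ≥ 0 the value a^{h,⌊t/h⌋} converges, as h → 0⁺, to a⁰·e^{−λt}, the solution of ∂_t u = −λu with u(0) = a⁰. -/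
open Filter Topology Set

/-- For `λ, h > 0` and `r^h = e^{-λh}`, the iterative minimisation of
`K^h(a|ā) = a log a + (ā−a) log(ā−a) − a log r^h − (ā−a) log(1−r^h)` over `(0, ā)`
produces `a^{h,k} = a⁰ e^{-λkh}`, and the interpolant `a^{h,⌊t/h⌋}` converges to
`a⁰ e^{-λt}` as `h → 0⁺`. -/
theorem stmt0 (lam a0 : ℝ) (hlam : 0 < lam) (ha0 : 0 < a0)
    (K : ℝ → ℝ → ℝ → ℝ)
    (hK : ∀ h abar a, K h abar a =
      a * Real.log a + (abar - a) * Real.log (abar - a)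
        - a * Real.log (Real.exp (-(lam * h)))
        - (abar - a) * Real.log (1 - Real.exp (-(lam * h))))
    (a : ℝ → ℕ → ℝ)
    (ha0' : ∀ h, a h 0 = a0)
    (hmin : ∀ h, 0 < h → ∀ k : ℕ,
      a h (k + 1) ∈ Set.Ioo (0 : ℝ) (a h k) ∧
      ∀ b ∈ Set.Ioo (0 : ℝ) (a h k), b ≠ a h (k + 1) →
        K h (a h k) (a h (k + 1)) < K h (a h k) b) :
    (∀ h, 0 < h → ∀ k : ℕ, a h k = a0 * Real.exp (-(lam * k * h))) ∧
    (∀ t : ℝ, 0 ≤ t →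
      Tendsto (fun h : ℝ => a h ⌊t / h⌋₊) (𝓝[>] (0 : ℝ))
        (𝓝 (a0 * Real.exp (-(lam * t))))) := by
  have key : ∀ h, 0 < h → ∀ k : ℕ, a h k = a0 * Real.exp (-(lam * k * h)) := by
    intro h hh k
    induction k with
    | zero => simp [ha0']
    | succ k ih =>
      have hA : 0 < a h k := by rw [ih]; positivity
      obtain ⟨hx, hm⟩ := hmin h hh k
      have hr0 : 0 < Real.exp (-(lam * h)) := Real.exp_pos _
      have hr1 : Real.exp (-(lam * h)) < 1 := by
        rw [Real.exp_lt_one_iff]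
        have := mul_pos hlam hh
        linarith
      have hstep : Real.exp (-(lam * h)) * a h k = a h (k + 1) := by
        by_contra hne
        have hlt := hm _ ⟨mul_pos hr0 hA, by nlinarith⟩ hne
        rw [hK, hK] at hlt
        generalize Real.exp (-(lam * h)) = r at *
        generalize a h k = A at *
        generalize a h (k + 1) = x at *
        obtain ⟨hx0, hx1⟩ := hx
        have gibbs : ∀ u v : ℝ, 0 < u → 0 < v →
            u - v ≤ u * Real.log u - u * Real.log v := by
          intro u v hu hv
          have h1 := Real.log_le_sub_one_of_pos (div_pos hv hu)
          rw [Real.log_div hv.ne' hu.ne'] at h1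
          have h2 := mul_le_mul_of_nonneg_left h1 hu.le
          have h3 : u * (v / u - 1) = v - u := by field_simp
          rw [h3] at h2
          linarith
        have hs : 0 < 1 - r := by linarith
        have g1 := gibbs x (r * A) hx0 (mul_pos hr0 hA)
        have g2 := gibbs (A - x) ((1 - r) * A) (by linarith) (mul_pos hs hA)
        have e : A - r * A = (1 - r) * A := by ring
        rw [e] at hlt
        rw [Real.log_mul hr0.ne' hA.ne'] at g1 hlt
        rw [Real.log_mul hs.ne' hA.ne'] at g2 hlt
        nlinarith
      rw [← hstep, ih]
      push_cast
      rw [show -(lam * ((k : ℝ) + 1) * h) = -(lam * h) + -(lam * k * h) by ring, Real.exp_add]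
      ring
  refine ⟨key, fun t ht => ?_⟩
  have h1 : Tendsto (fun h : ℝ => (⌊t * h⁻¹⌋₊ : ℝ) / h⁻¹) (𝓝[>] (0 : ℝ)) (𝓝 t) :=
    (tendsto_nat_floor_mul_div_atTop ht).comp tendsto_inv_nhdsGT_zero
  have h2 : Tendsto (fun h : ℝ => a0 * Real.exp (-(lam * ((⌊t * h⁻¹⌋₊ : ℝ) / h⁻¹))))
      (𝓝[>] (0 : ℝ)) (𝓝 (a0 * Real.exp (-(lam * t)))) :=
    ((Real.continuous_exp.tendsto _).comp (h1.const_mul lam).neg).const_mul a0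
  refine h2.congr' ?_
  filter_upwards [self_mem_nhdsWithin] with h hh
  rw [key h hh, div_inv_eq_mul, ← div_eq_mul_inv, mul_assoc]
end

section
/- Let (ρ^h) be a sequence in P₂^S(ℝ^d) and ρ ∈ P₂^S(ℝ^d) such that d(ρ^h, ρ) → 0 in the Wasserstein distance and S(ρ^h) → S(ρ). Then ρ^h and ρ are absolutely continuous with respect to Lebesgue measure and can be identified with their densities in L¹(ℝ^d), and there is a subsequence along which ρ^h → ρ strongly in L¹(ℝ^d) and ρ^h·log ρ^h → ρ·log ρ strongly in L¹(ℝ^d). -/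
open MeasureTheory Filter Topology Set
open scoped ENNReal NNReal Classical

noncomputable section

abbrev Eu (d : ℕ) := EuclideanSpace ℝ (Fin d)

/-- The Lebesgue density of a measure on `ℝ^d`. -/
noncomputable def dens {d : ℕ} (ρ : Measure (Eu d)) (x : Eu d) : ℝ :=
  (ρ.rnDeriv volume x).toReal

/-- The (negative Gibbs–Boltzmann) entropy `S(ρ) = ∫ f log f` if `ρ` has Lebesgue
density `f` (with integrable `f log f`), and `+∞` otherwise. -/
noncomputable def entS {d : ℕ} (ρ : Measure (Eu d)) : EReal :=
  if ρ ≪ volume ∧ Integrable (fun x => dens ρ x * Real.log (dens ρ x)) volume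
  then (((∫ x, dens ρ x * Real.log (dens ρ x)) : ℝ) : EReal) else ⊤

/-- Transport plans between two measures of equal mass. -/
def couplings {d : ℕ} (μ ν : Measure (Eu d)) : Set (Measure (Eu d × Eu d)) :=
  {q | q.map Prod.fst = μ ∧ q.map Prod.snd = ν}

/-- The squared Wasserstein distance. -/
noncomputable def Wsq {d : ℕ} (μ ν : Measure (Eu d)) : ℝ≥0∞ :=
  ⨅ q ∈ couplings μ ν, ∫⁻ p : Eu d × Eu d, edist p.1 p.2 ^ 2 ∂q

/-- `P₂^S(ℝ^d)`: probability measures with finite second moment and finite entropy. -/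
def memP2S {d : ℕ} (ρ : Measure (Eu d)) : Prop :=
  IsProbabilityMeasure ρ ∧ (∫⁻ x, (‖x‖₊ : ℝ≥0∞) ^ 2 ∂ρ) < ⊤ ∧ entS ρ ≠ ⊤

lemma pt_ineq (a t : ℝ) (ha : 0 ≤ a) :
    (√a - √(Real.exp t)) ^ 2 ≤ a * Real.log a - a * t - a + Real.exp t := by
  have he := Real.exp_pos t
  rcases ha.eq_or_lt with h | h
  · subst h
    simp [Real.sq_sqrt he.le]
  · have hs : 0 < √a := Real.sqrt_pos.2 h
    have hv : 0 < √(Real.exp t) := Real.sqrt_pos.2 he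
    have h1 := Real.log_le_sub_one_of_pos (div_pos hv hs)
    rw [Real.log_div hv.ne' hs.ne', Real.log_sqrt he.le, Real.log_sqrt h.le, Real.log_exp] at h1
    have h2 : a * (√(Real.exp t) / √a) = √a * √(Real.exp t) := by
      nth_rewrite 1 [← Real.mul_self_sqrt h.le]
      field_simp
    have h3 := mul_le_mul_of_nonneg_left h1 h.le
    have h4 := Real.sq_sqrt h.le
    have h5 := Real.sq_sqrt he.le
    nlinarith

lemma sqrt_ineq (a b c : ℝ) : (a - b) ^ 2 ≤ 2 * (a - c) ^ 2 + 2 * (b - c) ^ 2 := by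
  nlinarith [sq_nonneg (a + b - 2 * c)]

/-- Scheffé -/
lemma scheffe {α : Type*} [MeasurableSpace α] {μ : Measure α} (h : ℕ → α → ℝ) (k : α → ℝ)
    (hi : ∀ n, Integrable (h n) μ) (ki : Integrable k μ) (h0 : ∀ n x, 0 ≤ h n x)
    (k0 : ∀ x, 0 ≤ k x)
    (hae : ∀ᵐ x ∂μ, Tendsto (fun n => h n x) atTop (𝓝 (k x)))
    (hint : Tendsto (fun n => ∫ x, h n x ∂μ) atTop (𝓝 (∫ x, k x ∂μ))) :
    Tendsto (fun n => ∫ x, |h n x - k x| ∂μ) atTop (𝓝 0) := by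
  have e : ∀ n, ∫ x, |h n x - k x| ∂μ
      = (∫ x, h n x ∂μ) - (∫ x, k x ∂μ) + 2 * ∫ x, max (k x - h n x) 0 ∂μ := by
    intro n
    have i1 : Integrable (fun x => max (k x - h n x) 0) μ := (ki.sub (hi n)).pos_part
    rw [← integral_sub (hi n) ki, ← integral_const_mul, 
      ← integral_add (f := fun x => h n x - k x) ((hi n).sub ki) (i1.const_mul 2)]
    congr 1
    ext x
    rcases le_total (k x) (h n x) with hh | hh
    · rw [abs_of_nonneg (by linarith), max_eq_right (by linarith)]; ring
    · rw [abs_of_nonpos (by linarith), max_eq_left (by linarith)]; ring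
  have l : Tendsto (fun n => ∫ x, max (k x - h n x) 0 ∂μ) atTop (𝓝 (∫ x, (0:ℝ) ∂μ)) := by
    apply tendsto_integral_of_dominated_convergence k
    · intro n
      exact ((ki.sub (hi n)).pos_part).aestronglyMeasurable
    · exact ki
    · intro n
      refine Eventually.of_forall fun x => ?_
      rw [Real.norm_of_nonneg (le_max_right _ _)]
      exact max_le (by linarith [h0 n x]) (k0 x)
    · filter_upwards [hae] with x hx
      have := (hx.const_sub (k x)).max (tendsto_const_nhds (x := (0:ℝ)))
      simpa using this
  simp_rw [e]
  have := (hint.sub_const (∫ x, k x ∂μ)).add (l.const_mul 2)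
  simpa using this

def GoodTest {d : ℕ} (ψ : Eu d → ℝ) : Prop :=
  Continuous ψ ∧ ∀ ε > 0, ∃ C, 0 ≤ C ∧ ∀ x y, |ψ x - ψ y| ≤ ε * (1 + ‖y‖ ^ 2) + C * ‖x - y‖ ^ 2

lemma good_sq {d : ℕ} : GoodTest (fun x : Eu d => ‖x‖ ^ 2) := by
  refine ⟨by fun_prop, fun ε hε => ⟨1 + 1 / ε, by positivity, fun x y => ?_⟩⟩
  have h1 : |‖x‖ - ‖y‖| ≤ ‖x - y‖ := abs_norm_sub_norm_le x y
  have h2 : |‖x‖ ^ 2 - ‖y‖ ^ 2| ≤ ‖x - y‖ * (2 * ‖y‖ + ‖x - y‖) := by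
    have : ‖x‖ ^ 2 - ‖y‖ ^ 2 = (‖x‖ - ‖y‖) * (‖x‖ + ‖y‖) := by ring
    rw [this, abs_mul, abs_of_nonneg (a := ‖x‖ + ‖y‖) (by positivity)]
    have := le_abs_self (‖x‖ - ‖y‖)
    exact mul_le_mul h1 (by linarith) (by positivity) (by positivity)
  have h3 : 2 * ‖y‖ * ‖x - y‖ ≤ ε * ‖y‖ ^ 2 + 1 / ε * ‖x - y‖ ^ 2 := by
    have : 0 ≤ 1 / ε * (ε * ‖y‖ - ‖x - y‖) ^ 2 := by positivity
    have e : 1 / ε * (ε * ‖y‖ - ‖x - y‖) ^ 2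
      = ε * ‖y‖ ^ 2 + 1 / ε * ‖x - y‖ ^ 2 - 2 * ‖y‖ * ‖x - y‖ := by field_simp; ring
    linarith
  nlinarith

lemma good_uc {d : ℕ} {φ : Eu d → ℝ} (h : UniformContinuous φ) (L : ℝ) (hL : ∀ x, |φ x| ≤ L) :
    GoodTest φ := by
  refine ⟨h.continuous, fun ε hε => ?_⟩
  obtain ⟨δ, hδ, H⟩ := Metric.uniformContinuous_iff.1 h ε hε
  have L0 : 0 ≤ L := (abs_nonneg _).trans (hL 0)
  refine ⟨2 * L / δ ^ 2, by positivity, fun x y => ?_⟩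
  by_cases hd : dist x y < δ
  · have := H hd
    rw [Real.dist_eq] at this
    have h1 : 0 ≤ 2 * L / δ ^ 2 * ‖x - y‖ ^ 2 := by positivity
    nlinarith [sq_nonneg ‖y‖]
  · push Not at hd
    rw [dist_eq_norm] at hd
    have h1 : |φ x - φ y| ≤ 2 * L := by
      have := abs_sub (φ x) (φ y)
      linarith [hL x, hL y]
    have h2 : 2 * L ≤ 2 * L / δ ^ 2 * ‖x - y‖ ^ 2 := by
      rw [div_mul_eq_mul_div, le_div_iff₀ (by positivity)]
      gcongr
    have : 0 ≤ ε * (1 + ‖y‖ ^ 2) := by positivity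
    linarith

lemma int_sq {d : ℕ} {ρ : Measure (Eu d)} (h : memP2S ρ) : Integrable (fun x => ‖x‖ ^ 2) ρ := by
  refine ⟨by fun_prop, ?_⟩
  rw [HasFiniteIntegral]
  convert h.2.1 using 2
  ext x
  simp [enorm_eq_nnnorm]

lemma good_int {d : ℕ} {ψ : Eu d → ℝ} (h : GoodTest ψ) {ρ : Measure (Eu d)} (hρ : memP2S ρ) :
    Integrable ψ ρ := by
  have := hρ.1
  obtain ⟨C, hC, H⟩ := h.2 1 one_pos
  refine Integrable.mono' (((integrable_const (|ψ 0| + 1)).add ((int_sq hρ).const_mul C)))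
    h.1.aestronglyMeasurable (Eventually.of_forall fun x => ?_)
  have := H x 0
  simp at this
  have h2 := abs_sub_abs_le_abs_sub (ψ x) (ψ 0)
  simp only [Real.norm_eq_abs, Pi.add_apply]
  linarith

lemma good_tendsto {d : ℕ} {ψ : Eu d → ℝ} (h : GoodTest ψ) {ρ : ℕ → Measure (Eu d)}
    {ρlim : Measure (Eu d)}
    (hmem : ∀ n, memP2S (ρ n)) (hmemlim : memP2S ρlim)
    (hW : Tendsto (fun n => Wsq (ρ n) ρlim) atTop (𝓝 0)) :
    Tendsto (fun n => ∫ x, ψ x ∂(ρ n)) atTop (𝓝 (∫ x, ψ x ∂ρlim)) := by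
  have := hmemlim.1
  rw [Metric.tendsto_atTop']
  intro η hη
  set M := ∫ x, ‖x‖ ^ 2 ∂ρlim with hM
  have M0 : 0 ≤ M := integral_nonneg fun x => by positivity
  obtain ⟨C, hC, H⟩ := h.2 (η / 2 / (1 + M)) (by positivity)
  have hδ : (0:ℝ≥0∞) < ENNReal.ofReal (η / 4 / (1 + C)) := by
    rw [ENNReal.ofReal_pos]; positivity
  obtain ⟨N, hN⟩ := eventually_atTop.1 (hW.eventually (gt_mem_nhds hδ))
  refine ⟨N, fun n hn => ?_⟩
  have hlt := hN n hn.le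
  rw [Wsq] at hlt
  simp only [iInf_lt_iff] at hlt
  obtain ⟨q, hq, hlt⟩ := hlt
  obtain ⟨q1, q2⟩ := hq
  have := (hmem n).1
  have : IsProbabilityMeasure q := by
    constructor
    have : (q.map Prod.fst) univ = 1 := by rw [q1]; exact measure_univ
    rwa [Measure.map_apply measurable_fst MeasurableSet.univ, preimage_univ] at this
  have I1 : Integrable (fun p : Eu d × Eu d => ψ p.1) q := by
    have := good_int h (hmem n)
    rw [← q1] at this
    exact this.comp_measurable measurable_fst
  have I2 : Integrable (fun p : Eu d × Eu d => ψ p.2) q := by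
    have := good_int h hmemlim
    rw [← q2] at this
    exact this.comp_measurable measurable_snd
  have I3 : Integrable (fun p : Eu d × Eu d => ‖p.2‖ ^ 2) q := by
    have := int_sq hmemlim
    rw [← q2] at this
    exact this.comp_measurable measurable_snd
  have E3 : ∫ p, ‖p.2‖ ^ 2 ∂q = M := by
    rw [hM, ← q2, integral_map measurable_snd.aemeasurable (by fun_prop)]
  have E1 : ∫ x, ψ x ∂(ρ n) = ∫ p, ψ p.1 ∂q := by
    rw [← q1, integral_map measurable_fst.aemeasurable h.1.aestronglyMeasurable]
  have E2 : ∫ x, ψ x ∂ρlim = ∫ p, ψ p.2 ∂q := by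
    rw [← q2, integral_map measurable_snd.aemeasurable h.1.aestronglyMeasurable]
  have ee : ∀ p : Eu d × Eu d, edist p.1 p.2 ^ 2 = ENNReal.ofReal (‖p.1 - p.2‖ ^ 2) := by
    intro p
    rw [edist_dist, dist_eq_norm, ENNReal.ofReal_pow (norm_nonneg _)]
  simp_rw [ee] at hlt
  have I4 : Integrable (fun p : Eu d × Eu d => ‖p.1 - p.2‖ ^ 2) q := by
    refine ⟨by fun_prop, ?_⟩
    rw [hasFiniteIntegral_iff_ofReal (Eventually.of_forall fun p => by positivity)]
    exact hlt.trans ENNReal.ofReal_lt_top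
  rw [← ofReal_integral_eq_lintegral_ofReal I4 (Eventually.of_forall fun p => by positivity),
    ENNReal.ofReal_lt_ofReal_iff_of_nonneg (integral_nonneg fun p => by positivity)] at hlt
  rw [Real.dist_eq, E1, E2, ← integral_sub I1 I2]
  calc |∫ p, (ψ p.1 - ψ p.2) ∂q| ≤ ∫ p, |ψ p.1 - ψ p.2| ∂q := abs_integral_le_integral_abs
    _ ≤ ∫ p, (η / 2 / (1 + M) * (1 + ‖p.2‖ ^ 2) + C * ‖p.1 - p.2‖ ^ 2) ∂q := by
        apply integral_mono (I1.sub I2).abs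
        · exact (((integrable_const 1).add I3).const_mul _).add (I4.const_mul _)
        · intro p; exact H _ _
    _ = η / 2 / (1 + M) * (1 + M) + C * ∫ p, ‖p.1 - p.2‖ ^ 2 ∂q := by
        have J : Integrable (fun p : Eu d × Eu d => 1 + ‖p.2‖ ^ 2) q :=
          (integrable_const 1).add I3
        rw [integral_add (J.const_mul _) (I4.const_mul _),
          integral_const_mul, integral_const_mul, integral_add (integrable_const 1) I3, E3]
        simp
    _ ≤ η / 2 + C * (η / 4 / (1 + C)) := by
        rw [div_mul_cancel₀ _ (by positivity)]
        gcongr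
    _ < η := by
        have : C * (η / 4 / (1 + C)) ≤ η / 4 := by
          rw [mul_div_assoc', div_le_iff₀ (by positivity)]
          nlinarith
        linarith

def Dfun {d : ℕ} (f φ : Eu d → ℝ) (x : Eu d) : ℝ :=
  f x * Real.log (f x) - f x * (φ x - ‖x‖ ^ 2) - f x + Real.exp (φ x - ‖x‖ ^ 2)

lemma Dfun_ge {d : ℕ} (f φ : Eu d → ℝ) (x : Eu d) (h : 0 ≤ f x) :
    (√(f x) - √(Real.exp (φ x - ‖x‖ ^ 2))) ^ 2 ≤ Dfun f φ x := pt_ineq _ _ h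

lemma ent_facts {d : ℕ} {ρ : Measure (Eu d)} (h : memP2S ρ) :
    ρ ≪ volume ∧ Integrable (fun x => dens ρ x * Real.log (dens ρ x)) volume ∧
    entS ρ = (((∫ x, dens ρ x * Real.log (dens ρ x)) : ℝ) : EReal) := by
  have h3 := h.2.2
  unfold entS at h3 ⊢
  split_ifs at h3 ⊢ with hc
  · exact ⟨hc.1, hc.2, rfl⟩
  · exact absurd rfl h3

lemma dens_nonneg {d : ℕ} (ρ : Measure (Eu d)) (x : Eu d) : 0 ≤ dens ρ x := ENNReal.toReal_nonneg

lemma dens_meas {d : ℕ} (ρ : Measure (Eu d)) : Measurable (dens ρ) :=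
  (Measure.measurable_rnDeriv _ _).ennreal_toReal

lemma dens_mul_int {d : ℕ} {ρ : Measure (Eu d)} (h : memP2S ρ) {ψ : Eu d → ℝ} (hψ : Integrable ψ ρ) :
    Integrable (fun x => dens ρ x * ψ x) := by
  have := h.1
  exact (integrable_rnDeriv_smul_iff (ent_facts h).1).2 hψ

lemma dens_mul_integral {d : ℕ} {ρ : Measure (Eu d)} (h : memP2S ρ) (ψ : Eu d → ℝ) :
    ∫ x, dens ρ x * ψ x = ∫ x, ψ x ∂ρ := by
  have := h.1
  exact integral_rnDeriv_smul (ent_facts h).1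

lemma dens_int {d : ℕ} {ρ : Measure (Eu d)} (h : memP2S ρ) : Integrable (dens ρ) := by
  have := h.1
  simpa using dens_mul_int h (integrable_const (1:ℝ))

lemma dens_integral {d : ℕ} {ρ : Measure (Eu d)} (h : memP2S ρ) : ∫ x, dens ρ x = 1 := by
  have := h.1
  simpa using dens_mul_integral h (fun _ => 1)

lemma gauss_int {d : ℕ} : Integrable (fun x : Eu d => Real.exp (-‖x‖ ^ 2)) := by
  have := (GaussianFourier.integrable_cexp_neg_mul_sq_norm_add (V := Eu d) (b := 1) (by simp) 0 0).norm
  refine this.congr (Eventually.of_forall fun x => ?_)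
  simp only [Complex.norm_exp]
  congr 1
  simp [← Complex.ofReal_pow]

lemma exp_int {d : ℕ} {φ : Eu d → ℝ} (hm : Measurable φ) (L : ℝ) (hL : ∀ x, |φ x| ≤ L) :
    Integrable (fun x : Eu d => Real.exp (φ x - ‖x‖ ^ 2)) := by
  refine Integrable.mono' (gauss_int.const_mul (Real.exp L)) (by fun_prop)
    (Eventually.of_forall fun x => ?_)
  rw [Real.norm_of_nonneg (Real.exp_pos _).le, ← Real.exp_add]
  gcongr
  linarith [(abs_le.1 (hL x)).2]

lemma bdd_int {d : ℕ} {φ : Eu d → ℝ} (hm : Measurable φ) (L : ℝ) (hL : ∀ x, |φ x| ≤ L)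
    (μ : Measure (Eu d)) [IsFiniteMeasure μ] : Integrable φ μ :=
  Integrable.of_bound hm.aestronglyMeasurable L (Eventually.of_forall hL)

lemma Dfun_int {d : ℕ} {ρ : Measure (Eu d)} (h : memP2S ρ) {φ : Eu d → ℝ} (hm : Measurable φ)
    (L : ℝ) (hL : ∀ x, |φ x| ≤ L) :
    Integrable (Dfun (dens ρ) φ) ∧ ∫ x, Dfun (dens ρ) φ x =
      (∫ x, dens ρ x * Real.log (dens ρ x)) - ((∫ x, φ x ∂ρ) - ∫ x, ‖x‖ ^ 2 ∂ρ) - 1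
        + ∫ x : Eu d, Real.exp (φ x - ‖x‖ ^ 2) := by
  have := h.1
  have i1 := (ent_facts h).2.1
  have j := (bdd_int hm L hL ρ).sub (int_sq h)
  have i2 : Integrable (fun x => dens ρ x * (φ x - ‖x‖ ^ 2)) := dens_mul_int h j
  have i3 := dens_int h
  have i4 := exp_int hm L hL
  have i12 : Integrable (fun x => dens ρ x * Real.log (dens ρ x) - dens ρ x * (φ x - ‖x‖ ^ 2)) :=
    i1.sub i2
  have i123 : Integrable (fun x => dens ρ x * Real.log (dens ρ x) - dens ρ x * (φ x - ‖x‖ ^ 2)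
    - dens ρ x) := i12.sub i3
  refine ⟨i123.add i4, ?_⟩
  unfold Dfun
  rw [integral_add i123 i4, integral_sub i12 i3, integral_sub i1 i2,
    dens_mul_integral h (fun x => φ x - ‖x‖ ^ 2),
    dens_integral h, integral_sub (bdd_int hm L hL ρ) (int_sq h)]

/-- truncated log -/
def wL (L u : ℝ) : ℝ := Real.log (max (Real.exp (-L)) (min (Real.exp L) u))

lemma wL_meas (L : ℝ) : Measurable (wL L) := by unfold wL; fun_prop

lemma wL_abs (L u : ℝ) (hL : 0 ≤ L) : |wL L u| ≤ L := by
  unfold wL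
  have h1 : Real.exp (-L) ≤ max (Real.exp (-L)) (min (Real.exp L) u) := le_max_left _ _
  have h0 := (Real.exp_pos (-L)).trans_le h1
  have h2 : max (Real.exp (-L)) (min (Real.exp L) u) ≤ Real.exp L :=
    max_le (Real.exp_le_exp.2 (by linarith)) (min_le_left _ _)
  rw [abs_le]
  exact ⟨(Real.le_log_iff_exp_le h0).2 h1, (Real.log_le_iff_le_exp h0).2 h2⟩

lemma wL_exp (L u : ℝ) : Real.exp (wL L u) = max (Real.exp (-L)) (min (Real.exp L) u) :=
  Real.exp_log ((Real.exp_pos (-L)).trans_le (le_max_left _ _))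

lemma wL_bound (L u : ℝ) (hL : 0 ≤ L) (hu : 0 ≤ u) :
    u * Real.log u - u * wL L u - u + Real.exp (wL L u) ≤ 1 + |u * Real.log u| := by
  have hle : Real.exp (-L) ≤ Real.exp L := Real.exp_le_exp.2 (by linarith)
  have hneg : Real.exp (-L) ≤ 1 := Real.exp_le_one_iff.2 (by linarith)
  rcases le_total u (Real.exp (-L)) with h1 | h1
  · have e : wL L u = -L := by
      unfold wL
      rw [min_eq_right (h1.trans hle), max_eq_left h1, Real.log_exp]
    rw [e]
    rcases hu.eq_or_lt with h | h
    · subst h; simpa using hL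
    · have : Real.log u ≤ -L := (Real.log_le_iff_le_exp h).2 h1
      have := mul_le_mul_of_nonneg_left this hu
      have := abs_nonneg (u * Real.log u)
      linarith
  · rcases le_total u (Real.exp L) with h2 | h2
    · have e : wL L u = Real.log u := by
        unfold wL
        rw [min_eq_right h2, max_eq_right h1]
      rw [wL_exp, e, min_eq_right h2, max_eq_right h1]
      have := abs_nonneg (u * Real.log u)
      linarith
    · have e : wL L u = L := by
        unfold wL
        rw [min_eq_left h2, max_eq_right hle, Real.log_exp]
      rw [e]
      have := le_abs_self (u * Real.log u)
      have := mul_nonneg hu hL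
      linarith

lemma wL_tendsto (u : ℝ) (hu : 0 ≤ u) :
    Tendsto (fun n : ℕ => u * Real.log u - u * wL n u - u + Real.exp (wL n u)) atTop (𝓝 0) := by
  have ht : Tendsto (fun n : ℕ => Real.exp (-(n:ℝ))) atTop (𝓝 0) :=
    Real.tendsto_exp_neg_atTop_nhds_zero.comp tendsto_natCast_atTop_atTop
  have ht2 : Tendsto (fun n : ℕ => Real.exp (n:ℝ)) atTop atTop :=
    Real.tendsto_exp_atTop.comp tendsto_natCast_atTop_atTop
  rcases hu.eq_or_lt with h | h
  · subst h
    simp only [zero_mul, sub_zero, zero_add, wL_exp]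
    refine ht.congr fun n => ?_
    rw [min_eq_right (Real.exp_pos _).le, max_eq_left (Real.exp_pos _).le]
  · refine tendsto_const_nhds.congr' ?_
    filter_upwards [ht.eventually (gt_mem_nhds h), ht2.eventually_ge_atTop u] with n h1 h2
    have e : wL n u = Real.log u := by
      unfold wL
      rw [min_eq_right h2, max_eq_right h1.le]
    rw [e, Real.exp_log h]
    ring

lemma Dfun_u {d : ℕ} (f φ : Eu d → ℝ) (x : Eu d) (h : 0 ≤ f x) :
    Dfun f φ x = Real.exp (-‖x‖ ^ 2) * ((f x * Real.exp (‖x‖ ^ 2)) * Real.log (f x * Real.exp (‖x‖ ^ 2))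
      - (f x * Real.exp (‖x‖ ^ 2)) * φ x - (f x * Real.exp (‖x‖ ^ 2)) + Real.exp (φ x)) := by
  have e1 : Real.exp (-‖x‖ ^ 2) * Real.exp (‖x‖ ^ 2) = 1 := by
    rw [← Real.exp_add]; simp
  have e2 : f x * Real.log (f x * Real.exp (‖x‖ ^ 2)) = f x * Real.log (f x) + f x * ‖x‖ ^ 2 := by
    rcases h.eq_or_lt with h | h
    · rw [← h]; simp
    · rw [Real.log_mul h.ne' (Real.exp_pos _).ne', Real.log_exp]; ring
  have e3 : Real.exp (φ x - ‖x‖ ^ 2) = Real.exp (-‖x‖ ^ 2) * Real.exp (φ x) := by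
    rw [← Real.exp_add]; congr 1; ring
  unfold Dfun
  rw [e3]
  linear_combination (-(f x * Real.log (f x * Real.exp (‖x‖ ^ 2)) - f x * φ x - f x)) * e1 - e2

lemma approx1 {d : ℕ} {ρ : Measure (Eu d)} (h : memP2S ρ) :
    Tendsto (fun n : ℕ => ∫ x, Dfun (dens ρ) (fun x => wL n (dens ρ x * Real.exp (‖x‖ ^ 2))) x)
      atTop (𝓝 0) := by
  have hd := dens_meas ρ
  have hm : ∀ n : ℕ, Measurable (fun x => wL n (dens ρ x * Real.exp (‖x‖ ^ 2))) := fun n =>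
    (wL_meas n).comp (by fun_prop)
  have hb : Integrable (fun x : Eu d => Real.exp (-‖x‖ ^ 2) +
      |dens ρ x * Real.log (dens ρ x) + dens ρ x * ‖x‖ ^ 2|) :=
    gauss_int.add (((ent_facts h).2.1.add (dens_mul_int h (int_sq h))).abs)
  have : Tendsto (fun n : ℕ => ∫ x, Dfun (dens ρ) (fun x => wL n (dens ρ x * Real.exp (‖x‖ ^ 2))) x)
      atTop (𝓝 (∫ x : Eu d, (0:ℝ))) := by
    apply tendsto_integral_of_dominated_convergence _ _ hb
    · intro n
      refine Eventually.of_forall fun x => ?_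
      rw [Real.norm_of_nonneg ((sq_nonneg _).trans (Dfun_ge _ _ _ (dens_nonneg ρ x)))]
      rw [Dfun_u _ _ _ (dens_nonneg ρ x)]
      have hu : 0 ≤ dens ρ x * Real.exp (‖x‖ ^ 2) := mul_nonneg (dens_nonneg ρ x) (Real.exp_pos _).le
      have := mul_le_mul_of_nonneg_left (wL_bound n _ n.cast_nonneg hu) (Real.exp_pos (-‖x‖ ^ 2)).le
      refine this.trans (le_of_eq ?_)
      rw [mul_add, mul_one, ← abs_of_pos (Real.exp_pos (-‖x‖ ^ 2)), ← abs_mul, abs_of_pos (Real.exp_pos (-‖x‖ ^ 2))]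
      congr 2
      have e1 : Real.exp (-‖x‖ ^ 2) * Real.exp (‖x‖ ^ 2) = 1 := by
        rw [← Real.exp_add]; simp
      have e2 : dens ρ x * Real.log (dens ρ x * Real.exp (‖x‖ ^ 2)) = dens ρ x * Real.log (dens ρ x) + dens ρ x * ‖x‖ ^ 2 := by
        rcases (dens_nonneg ρ x).eq_or_lt with h | h
        · rw [← h]; simp
        · rw [Real.log_mul h.ne' (Real.exp_pos _).ne', Real.log_exp]; ring
      linear_combination (dens ρ x * Real.log (dens ρ x * Real.exp (‖x‖ ^ 2))) * e1 + e2
    · refine Eventually.of_forall fun x => ?_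
      simp_rw [Dfun_u _ _ _ (dens_nonneg ρ x)]
      have hu : 0 ≤ dens ρ x * Real.exp (‖x‖ ^ 2) := mul_nonneg (dens_nonneg ρ x) (Real.exp_pos _).le
      simpa using (wL_tendsto _ hu).const_mul (Real.exp (-‖x‖ ^ 2))
    · intro n
      exact (Dfun_int h (hm n) n fun x => wL_abs _ _ n.cast_nonneg).1.aestronglyMeasurable
  simpa using this

lemma exp_lip1 (a b L : ℝ) (ha : a ≤ L) (h : b ≤ a) :
    Real.exp a - Real.exp b ≤ Real.exp L * (a - b) := by
  have h1 := Real.add_one_le_exp (b - a)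
  have h2 : Real.exp b = Real.exp a * Real.exp (b - a) := by rw [← Real.exp_add]; congr 1; ring
  have h3 : Real.exp a ≤ Real.exp L := Real.exp_le_exp.2 ha
  have h4 := mul_le_mul_of_nonneg_left h1 (Real.exp_pos a).le
  have h5 := mul_le_mul_of_nonneg_right h3 (sub_nonneg.2 h)
  nlinarith

lemma exp_lip (a b L : ℝ) (ha : a ≤ L) :
    Real.exp a - Real.exp b ≤ Real.exp L * |a - b| := by
  rcases le_total b a with h | h
  · rw [abs_of_nonneg (by linarith)]; exact exp_lip1 a b L ha h
  · have := Real.exp_le_exp.2 h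
    have : 0 ≤ Real.exp L * |a - b| := by positivity
    linarith

lemma clamp_lip (a b L : ℝ) (ha : |a| ≤ L) :
    |a - max (-L) (min L b)| ≤ |a - b| := by
  obtain ⟨h1, h2⟩ := abs_le.1 ha
  have : a = max (-L) (min L a) := by rw [min_eq_right h2, max_eq_right h1]
  nth_rewrite 1 [this]
  refine (abs_max_sub_max_le_max _ _ _ _).trans ?_
  simp only [sub_self, abs_zero]
  refine max_le (abs_nonneg _) ?_
  refine (abs_min_sub_min_le_max _ _ _ _).trans ?_
  simp

lemma approx2 {d : ℕ} {ρ : Measure (Eu d)} (h : memP2S ρ) (ε : ℝ) (hε : 0 < ε) :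
    ∃ (φ : Eu d → ℝ) (L : ℝ), UniformContinuous φ ∧ (∀ x, |φ x| ≤ L) ∧
      ∫ x, Dfun (dens ρ) φ x < ε := by
  have hd := dens_meas ρ
  obtain ⟨L, hLε⟩ := ((approx1 h).eventually (gt_mem_nhds (half_pos hε))).exists
  set w : Eu d → ℝ := fun x => wL L (dens ρ x * Real.exp (‖x‖ ^ 2)) with hw
  have wm : Measurable w := (wL_meas L).comp (by fun_prop)
  have wb : ∀ x, |w x| ≤ L := fun x => wL_abs _ _ L.cast_nonneg
  set g : Eu d → ℝ := fun x => dens ρ x + Real.exp (-‖x‖ ^ 2) with hg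
  have g0 : ∀ x, 0 ≤ g x := fun x => add_nonneg (dens_nonneg ρ x) (Real.exp_pos _).le
  have gi : Integrable g := (dens_int h).add gauss_int
  have gm : Measurable g := by fun_prop
  set μ : Measure (Eu d) := volume.withDensity (fun x => ENNReal.ofReal (g x)) with hμ
  have : IsFiniteMeasure μ := isFiniteMeasure_withDensity_ofReal gi.2
  obtain ⟨φ₀, hc, hle, hcont, hint⟩ := (bdd_int wm L wb μ).exists_hasCompactSupport_integral_sub_le
    (ε := ε / 4 / Real.exp L) (by positivity)
  have hφ₀u := hc.uniformContinuous_of_continuous hcont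
  set φ : Eu d → ℝ := fun x => max (-(L:ℝ)) (min L (φ₀ x)) with hφ
  have hφu : UniformContinuous φ := by
    have : LipschitzWith 1 (fun t : ℝ => max (-(L:ℝ)) (min L t)) :=
      (LipschitzWith.id.const_min _).const_max _
    exact this.uniformContinuous.comp hφ₀u
  have L0 : (0:ℝ) ≤ L := L.cast_nonneg
  have φb : ∀ x, |φ x| ≤ L := fun x =>
    abs_le.2 ⟨le_max_left _ _, max_le (by linarith) (min_le_left _ _)⟩
  refine ⟨φ, L, hφu, φb, ?_⟩
  have φm := hφu.continuous.measurable
  have hJ : Integrable (fun x => ‖w x - φ₀ x‖) μ := ((bdd_int wm L wb μ).sub hint).norm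
  have J1 : Integrable (fun x => g x * |w x - φ₀ x|) := by
    rw [hμ, integrable_withDensity_iff_integrable_smul' (by fun_prop) (by simp)] at hJ
    simpa [ENNReal.toReal_ofReal (g0 _)] using hJ
  have J2 : ∫ x, g x * |w x - φ₀ x| ≤ ε / 4 / Real.exp L := by
    rw [hμ, integral_withDensity_eq_integral_toReal_smul (by fun_prop) (by simp)] at hle
    simpa [ENNReal.toReal_ofReal (g0 _)] using hle
  have D1 := (Dfun_int h wm L wb).1
  calc ∫ x, Dfun (dens ρ) φ x
      ≤ ∫ x, (Dfun (dens ρ) w x + Real.exp L * (g x * |w x - φ₀ x|)) := by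
        apply integral_mono (Dfun_int h φm L φb).1 (D1.add (J1.const_mul _))
        intro x
        have c1 : |w x - φ x| ≤ |w x - φ₀ x| := clamp_lip _ _ _ (wb x)
        have c2 := exp_lip (φ x) (w x) L (abs_le.1 (φb x)).2
        rw [abs_sub_comm] at c2
        have c3 := (le_abs_self (w x - φ x)).trans c1
        have c4 := mul_le_mul_of_nonneg_left c3 (dens_nonneg ρ x)
        have c5 := c2.trans (mul_le_mul_of_nonneg_left c1 (Real.exp_pos _).le)
        have c6 := mul_le_mul_of_nonneg_left c5 (Real.exp_pos (-‖x‖ ^ 2)).le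
        have c7 : dens ρ x * |w x - φ₀ x| ≤ Real.exp L * (dens ρ x * |w x - φ₀ x|) :=
          le_mul_of_one_le_left (mul_nonneg (dens_nonneg ρ x) (abs_nonneg _)) (Real.one_le_exp L0)
        have e : ∀ t : ℝ, Real.exp (t - ‖x‖ ^ 2) = Real.exp (-‖x‖ ^ 2) * Real.exp t := by
          intro t; rw [← Real.exp_add]; congr 1; ring
        simp only [Pi.add_apply, Dfun, e, hg]
        linarith
    _ = (∫ x, Dfun (dens ρ) w x) + Real.exp L * ∫ x, g x * |w x - φ₀ x| := by
        rw [integral_add D1 (J1.const_mul _), integral_const_mul]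
    _ ≤ (∫ x, Dfun (dens ρ) w x) + Real.exp L * (ε / 4 / Real.exp L) := by gcongr
    _ = (∫ x, Dfun (dens ρ) w x) + ε / 4 := by rw [mul_div_cancel₀ _ (Real.exp_pos _).ne']
    _ < ε := by linarith

/-- if `ρ^h → ρ` in Wasserstein distance and `S(ρ^h) → S(ρ)` in
`P₂^S(ℝ^d)`, then all measures are absolutely continuous and, along a
subsequence, the densities and their entropy integrands converge strongly
in `L¹(ℝ^d)`. -/
theorem stmt2 (d : ℕ) (ρ : ℕ → Measure (Eu d)) (ρlim : Measure (Eu d))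
    (hmem : ∀ n, memP2S (ρ n)) (hmemlim : memP2S ρlim)
    (hW : Tendsto (fun n => Wsq (ρ n) ρlim) atTop (𝓝 0))
    (hS : Tendsto (fun n => entS (ρ n)) atTop (𝓝 (entS ρlim))) :
    (∀ n, ρ n ≪ volume) ∧ ρlim ≪ volume ∧
    ∃ φ : ℕ → ℕ, StrictMono φ ∧
      Tendsto (fun n => ∫ x, |dens (ρ (φ n)) x - dens ρlim x|) atTop (𝓝 0) ∧
      Tendsto (fun n => ∫ x,
          |dens (ρ (φ n)) x * Real.log (dens (ρ (φ n)) x)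
            - dens ρlim x * Real.log (dens ρlim x)|) atTop (𝓝 0) := by
  have hac := fun n => (ent_facts (hmem n)).1
  refine ⟨hac, (ent_facts hmemlim).1, ?_⟩
  have := hmemlim.1
  have hSr : Tendsto (fun n => ∫ x, dens (ρ n) x * Real.log (dens (ρ n) x)) atTop
      (𝓝 (∫ x, dens ρlim x * Real.log (dens ρlim x))) := by
    rw [(ent_facts hmemlim).2.2] at hS
    simp_rw [fun n => (ent_facts (hmem n)).2.2] at hS
    exact EReal.tendsto_coe.1 hS
  have hsq := good_tendsto good_sq hmem hmemlim hW
  have hD : ∀ (φ : Eu d → ℝ) (L : ℝ), UniformContinuous φ → (∀ x, |φ x| ≤ L) →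
      Tendsto (fun n => ∫ x, Dfun (dens (ρ n)) φ x) atTop (𝓝 (∫ x, Dfun (dens ρlim) φ x)) := by
    intro φ L hu hb
    have hm := hu.continuous.measurable
    rw [(Dfun_int hmemlim hm L hb).2]
    simp_rw [fun n => (Dfun_int (hmem n) hm L hb).2]
    have h1 := good_tendsto (good_uc hu L hb) hmem hmemlim hW
    exact ((hSr.sub (h1.sub hsq)).sub_const 1).add_const _
  set G : ℕ → Eu d → ℝ := fun n x => (√(dens (ρ n) x) - √(dens ρlim x)) ^ 2 with hG
  have Gm : ∀ n, Measurable (G n) := fun n => by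
    have := dens_meas (ρ n)
    have := dens_meas ρlim
    fun_prop
  have Gle : ∀ (φ : Eu d → ℝ) n x, G n x ≤ 2 * Dfun (dens (ρ n)) φ x + 2 * Dfun (dens ρlim) φ x := by
    intro φ n x
    have h1 := Dfun_ge (dens (ρ n)) φ x (dens_nonneg _ _)
    have h2 := Dfun_ge (dens ρlim) φ x (dens_nonneg _ _)
    have h3 := sqrt_ineq (√(dens (ρ n) x)) (√(dens ρlim x)) (√(Real.exp (φ x - ‖x‖ ^ 2)))
    simp only [hG]
    linarith
  have z : UniformContinuous (fun _ : Eu d => (0:ℝ)) := uniformContinuous_const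
  have zb : ∀ x : Eu d, |(fun _ : Eu d => (0:ℝ)) x| ≤ 0 := by simp
  have Gi : ∀ n, Integrable (G n) := fun n => by
    refine Integrable.mono' (((Dfun_int (hmem n) z.continuous.measurable 0 zb).1.const_mul 2).add
      ((Dfun_int hmemlim z.continuous.measurable 0 zb).1.const_mul 2)) (Gm n).aestronglyMeasurable
      (Eventually.of_forall fun x => ?_)
    rw [Real.norm_of_nonneg (sq_nonneg _)]
    exact Gle _ n x
  have Glim : Tendsto (fun n => ∫ x, G n x) atTop (𝓝 0) := by
    rw [tendsto_order]
    refine ⟨fun a ha => Eventually.of_forall fun n =>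
      ha.trans_le (integral_nonneg fun x => sq_nonneg _), fun a ha => ?_⟩
    obtain ⟨φ, L, hu, hb, hlt⟩ := approx2 hmemlim (a / 4) (by positivity)
    have hm := hu.continuous.measurable
    filter_upwards [(hD φ L hu hb).eventually (gt_mem_nhds hlt)] with n hn
    have i1 := (Dfun_int (hmem n) hm L hb).1.const_mul 2
    have i2 := (Dfun_int hmemlim hm L hb).1.const_mul 2
    have := integral_mono (Gi n) (i1.add i2) (Gle φ n)
    simp only [Pi.add_apply] at this
    rw [integral_add i1 i2, integral_const_mul, integral_const_mul] at this
    linarith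
  have Gmeas : TendstoInMeasure volume G atTop (fun _ => (0:ℝ)) := by
    refine tendstoInMeasure_of_tendsto_eLpNorm (p := 1) one_ne_zero
      (fun n => (Gm n).aestronglyMeasurable) aestronglyMeasurable_const ?_
    have : ∀ n, eLpNorm (G n - fun _ => (0:ℝ)) 1 volume = ENNReal.ofReal (∫ x, G n x) := by
      intro n
      have e : (G n - fun _ => (0:ℝ)) = G n := by ext x; simp
      rw [e, eLpNorm_one_eq_lintegral_enorm, ← ofReal_integral_norm_eq_lintegral_enorm (Gi n)]
      congr 2
      ext x
      exact Real.norm_of_nonneg (sq_nonneg _)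
    simp_rw [this]
    simpa using ENNReal.tendsto_ofReal Glim
  obtain ⟨φ, hφ, hae⟩ := Gmeas.exists_seq_tendsto_ae
  have hφt := hφ.tendsto_atTop
  have fae : ∀ᵐ x, Tendsto (fun n => dens (ρ (φ n)) x) atTop (𝓝 (dens ρlim x)) := by
    filter_upwards [hae] with x hx
    have h1 : Tendsto (fun n => |√(dens (ρ (φ n)) x) - √(dens ρlim x)|) atTop (𝓝 0) := by
      have := hx.sqrt
      simpa [hG, Real.sqrt_sq_eq_abs] using this
    have h2 : Tendsto (fun n => √(dens (ρ (φ n)) x)) atTop (𝓝 (√(dens ρlim x))) := by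
      rw [tendsto_iff_dist_tendsto_zero]
      simpa [Real.dist_eq] using h1
    have h3 := h2.pow 2
    simpa [Real.sq_sqrt (dens_nonneg _ _)] using h3
  have c1 := scheffe (fun n => dens (ρ (φ n))) (dens ρlim) (fun n => dens_int (hmem _))
    (dens_int hmemlim) (fun n x => dens_nonneg _ _) (fun x => dens_nonneg _ _) fae
    (by simp [dens_integral hmemlim, dens_integral (hmem _)])
  refine ⟨φ, hφ, c1, ?_⟩
  have c2 := scheffe (fun n x => dens (ρ (φ n)) x * ‖x‖ ^ 2) (fun x => dens ρlim x * ‖x‖ ^ 2)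
    (fun n => dens_mul_int (hmem _) (int_sq (hmem _)))
    (dens_mul_int hmemlim (int_sq hmemlim))
    (fun n x => mul_nonneg (dens_nonneg _ _) (by positivity))
    (fun x => mul_nonneg (dens_nonneg _ _) (by positivity))
    (by filter_upwards [fae] with x hx using hx.mul_const _)
    (by
      rw [dens_mul_integral hmemlim (fun x => ‖x‖ ^ 2)]
      simp_rw [fun n => dens_mul_integral (hmem n) (fun x => ‖x‖ ^ 2)]
      exact hsq.comp hφt)
  have c3 := scheffe (fun n => Dfun (dens (ρ (φ n))) (fun _ => 0)) (Dfun (dens ρlim) (fun _ => 0))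
    (fun n => (Dfun_int (hmem _) z.continuous.measurable 0 zb).1)
    (Dfun_int hmemlim z.continuous.measurable 0 zb).1
    (fun n x => (sq_nonneg _).trans (Dfun_ge _ _ _ (dens_nonneg _ _)))
    (fun x => (sq_nonneg _).trans (Dfun_ge _ _ _ (dens_nonneg _ _)))
    (by
      filter_upwards [fae] with x hx
      have h1 := (Real.continuous_mul_log.tendsto (dens ρlim x)).comp hx
      exact ((h1.sub (hx.mul_const _)).sub hx).add_const _)
    ((hD _ 0 z zb).comp hφt)
  have hsum := (c3.add c2).add c1
  simp only [add_zero] at hsum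
  refine squeeze_zero (fun n => integral_nonneg fun x => abs_nonneg _) (fun n => ?_) hsum
  have i1 : Integrable (fun x => |dens (ρ (φ n)) x - dens ρlim x|) :=
    ((dens_int (hmem _)).sub (dens_int hmemlim)).abs
  have i2 : Integrable (fun x => |dens (ρ (φ n)) x * ‖x‖ ^ 2 - dens ρlim x * ‖x‖ ^ 2|) :=
    ((dens_mul_int (hmem _) (int_sq (hmem _))).sub (dens_mul_int hmemlim (int_sq hmemlim))).abs
  have i3 : Integrable (fun x => |Dfun (dens (ρ (φ n))) (fun _ => 0) x
      - Dfun (dens ρlim) (fun _ => 0) x|) :=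
    ((Dfun_int (hmem _) z.continuous.measurable 0 zb).1.sub
      (Dfun_int hmemlim z.continuous.measurable 0 zb).1).abs
  rw [← integral_add i3 i2, ← integral_add (f := fun x => |Dfun (dens (ρ (φ n))) (fun _ => 0) x
      - Dfun (dens ρlim) (fun _ => 0) x| +
      |dens (ρ (φ n)) x * ‖x‖ ^ 2 - dens ρlim x * ‖x‖ ^ 2|) (i3.add i2) i1]
  refine integral_mono (((ent_facts (hmem _)).2.1.sub (ent_facts hmemlim).2.1).abs)
    ((i3.add i2).add i1) fun x => ?_
  have e : dens (ρ (φ n)) x * Real.log (dens (ρ (φ n)) x)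
            - dens ρlim x * Real.log (dens ρlim x)
      = (Dfun (dens (ρ (φ n))) (fun _ => 0) x - Dfun (dens ρlim) (fun _ => 0) x)
        - (dens (ρ (φ n)) x * ‖x‖ ^ 2 - dens ρlim x * ‖x‖ ^ 2)
        + (dens (ρ (φ n)) x - dens ρlim x) := by
    simp only [Dfun]; ring
  simp only [Pi.add_apply]
  rw [e]
  exact (abs_add_le _ _).trans (by gcongr; exact abs_sub _ _)

end
end

section
/- Let f₁, f₂ be nonnegative functions in L¹(ℝ^d) with f₁·log f₁ ∈ L¹(ℝ^d), f₂·log f₂ ∈ L¹(ℝ^d) and masses m₁ := ‖f₁‖_{L¹} > 0, m₂ := ‖f₂‖_{L¹} > 0. Then ∫ (f₁+f₂) log(f₁+f₂) dx ≤ ∫ f₁ log f₁ dx + ∫ f₂ log f₂ dx − m₁·log(m₁/(m₁+m₂)) − m₂·log(m₂/(m₁+m₂)). -/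
open MeasureTheory

lemma aux_log_up {a s t : ℝ} (ha : 0 ≤ a) (hs : 0 < s) (ht : 0 < t) :
    a * Real.log t + a * Real.log s - a * Real.log a ≤ t * s - a := by
  rcases ha.eq_or_lt with h | h
  · subst h
    have := mul_pos ht hs
    simp
    exact this.le
  · have h1 := Real.log_le_sub_one_of_pos (show 0 < t * s / a by positivity)
    rw [Real.log_div (by positivity) h.ne', Real.log_mul ht.ne' hs.ne'] at h1
    have h2 := mul_le_mul_of_nonneg_left h1 ha
    have h3 : a * (t * s / a - 1) = t * s - a := by field_simp
    linarith

lemma aux_upper {a b t u : ℝ} (ha : 0 ≤ a) (hb : 0 ≤ b) (ht : 0 < t) (hu : 0 < u)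
    (htu : t + u = 1) :
    (a + b) * Real.log (a + b) ≤
      a * Real.log a + b * Real.log b - a * Real.log t - b * Real.log u := by
  rcases (add_nonneg ha hb).eq_or_lt with h | h
  · have h1 : a = 0 := by linarith
    have h2 : b = 0 := by linarith
    simp [h1, h2]
  · have h1 := aux_log_up ha h ht
    have h2 := aux_log_up hb h hu
    have h3 : t * (a + b) + u * (a + b) = a + b := by rw [← add_mul, htu, one_mul]
    linarith

lemma aux_low {a b : ℝ} (ha : 0 ≤ a) (hb : 0 ≤ b) :
    a * Real.log a ≤ a * Real.log (a + b) := by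
  rcases ha.eq_or_lt with h | h
  · simp [← h]
  · exact mul_le_mul_of_nonneg_left (Real.log_le_log h (by linarith)) ha

lemma aux_lower {a b : ℝ} (ha : 0 ≤ a) (hb : 0 ≤ b) :
    a * Real.log a + b * Real.log b ≤ (a + b) * Real.log (a + b) := by
  have h1 := aux_low ha hb
  have h2 := aux_low hb ha
  rw [add_comm b a] at h2
  linarith

/-- for nonnegative `f₁, f₂ ∈ L¹(ℝ^d)` with integrable entropy
integrands and positive masses `m₁, m₂`, the entropy is subadditive up to mixing
terms:
`∫(f₁+f₂)log(f₁+f₂) ≤ ∫f₁ log f₁ + ∫f₂ log f₂ − m₁ log(m₁/(m₁+m₂)) − m₂ log(m₂/(m₁+m₂))`. -/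
theorem stmt13 (d : ℕ) (f₁ f₂ : EuclideanSpace ℝ (Fin d) → ℝ)
    (hnn₁ : ∀ x, 0 ≤ f₁ x) (hnn₂ : ∀ x, 0 ≤ f₂ x)
    (hint₁ : Integrable f₁ volume) (hint₂ : Integrable f₂ volume)
    (hent₁ : Integrable (fun x => f₁ x * Real.log (f₁ x)) volume)
    (hent₂ : Integrable (fun x => f₂ x * Real.log (f₂ x)) volume)
    (m₁ m₂ : ℝ) (hm₁ : m₁ = ∫ x, f₁ x) (hm₂ : m₂ = ∫ x, f₂ x)
    (hm₁pos : 0 < m₁) (hm₂pos : 0 < m₂) :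
    ∫ x, (f₁ x + f₂ x) * Real.log (f₁ x + f₂ x) ≤
      (∫ x, f₁ x * Real.log (f₁ x)) + (∫ x, f₂ x * Real.log (f₂ x))
        - m₁ * Real.log (m₁ / (m₁ + m₂)) - m₂ * Real.log (m₂ / (m₁ + m₂)) := by
  have ht : 0 < m₁ / (m₁ + m₂) := by positivity
  have hu : 0 < m₂ / (m₁ + m₂) := by positivity
  have htu : m₁ / (m₁ + m₂) + m₂ / (m₁ + m₂) = 1 := by field_simp
  generalize m₁ / (m₁ + m₂) = t at *
  generalize m₂ / (m₁ + m₂) = u at *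
  have hL := hent₁.add hent₂
  have i1 := hint₁.mul_const (Real.log t)
  have i2 := hint₂.mul_const (Real.log u)
  have hU := (hL.sub i1).sub i2
  have hmeas : AEStronglyMeasurable
      (fun x => (f₁ x + f₂ x) * Real.log (f₁ x + f₂ x)) volume :=
    Real.continuous_mul_log.comp_aestronglyMeasurable (hint₁.add hint₂).aestronglyMeasurable
  have hI : Integrable (fun x => (f₁ x + f₂ x) * Real.log (f₁ x + f₂ x)) volume :=
    integrable_of_le_of_le hmeas
      (Filter.Eventually.of_forall fun x => aux_lower (hnn₁ x) (hnn₂ x))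
      (Filter.Eventually.of_forall fun x => aux_upper (hnn₁ x) (hnn₂ x) ht hu htu) hL hU
  have key := integral_mono hI hU fun x => aux_upper (hnn₁ x) (hnn₂ x) ht hu htu
  rw [integral_sub' (hL.sub i1) i2, integral_sub' hL i1, integral_add' hent₁ hent₂,
    integral_mul_const, integral_mul_const, ← hm₁, ← hm₂] at key
  exact key
end

section
/- Let 0 < r < 1 and n ≥ 1 an integer. Then Σ_{k=1}^{n} [ r^k·log r + (r^{k−1}−r^k)·log(1−r) − (r^{k−1}−r^k)·log((r^{k−1}−r^k)/(1−r^k)) − (1−r^{k−1})·log((1−r^{k−1})/(1−r^k)) ] = r^n·log(r^n) + (1−r^n)·log(1−r^n), and this quantity is ≤ 0. -/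
open Finset

/-- the telescoping identity
`Σ_{k=1}^n [r^k log r + (r^{k−1}−r^k) log(1−r) − (r^{k−1}−r^k) log((r^{k−1}−r^k)/(1−r^k))
− (1−r^{k−1}) log((1−r^{k−1})/(1−r^k))] = r^n log(r^n) + (1−r^n) log(1−r^n) ≤ 0`
for `0 < r < 1`. -/
theorem stmt15 (r : ℝ) (hr0 : 0 < r) (hr1 : r < 1) (n : ℕ) (hn : 1 ≤ n) :
    (∑ k ∈ Finset.Icc 1 n,
        (r ^ k * Real.log r + (r ^ (k - 1) - r ^ k) * Real.log (1 - r)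
          - (r ^ (k - 1) - r ^ k) * Real.log ((r ^ (k - 1) - r ^ k) / (1 - r ^ k))
          - (1 - r ^ (k - 1)) * Real.log ((1 - r ^ (k - 1)) / (1 - r ^ k))))
      = r ^ n * Real.log (r ^ n) + (1 - r ^ n) * Real.log (1 - r ^ n) ∧
    r ^ n * Real.log (r ^ n) + (1 - r ^ n) * Real.log (1 - r ^ n) ≤ 0 := by
  clear hn
  constructor
  · induction n with
    | zero => simp
    | succ m ih =>
      rw [Finset.sum_Icc_succ_top (by omega), ih]
      have ha : 0 < r ^ m := pow_pos hr0 m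
      have hb1 : r ^ (m + 1) < 1 := pow_lt_one₀ hr0.le hr1 (by omega)
      have hb : r ^ (m + 1) = r ^ m * r := pow_succ r m
      have h1 : (0 : ℝ) < 1 - r := by linarith
      have h2 : 0 < 1 - r ^ m * r := by rw [← hb]; linarith
      have e1 : Real.log ((r ^ m - r ^ m * r) / (1 - r ^ m * r))
          = Real.log (r ^ m) + Real.log (1 - r) - Real.log (1 - r ^ m * r) := by
        rw [show r ^ m - r ^ m * r = r ^ m * (1 - r) by ring,
          Real.log_div (mul_pos ha h1).ne' h2.ne', Real.log_mul ha.ne' h1.ne']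
      have e2 : (1 - r ^ m) * Real.log ((1 - r ^ m) / (1 - r ^ m * r))
          = (1 - r ^ m) * (Real.log (1 - r ^ m) - Real.log (1 - r ^ m * r)) := by
        by_cases h : 1 - r ^ m = 0
        · rw [h]; simp
        · rw [Real.log_div h h2.ne']
      rw [Nat.add_sub_cancel, hb, e1, e2, Real.log_mul ha.ne' hr0.ne']
      ring
  · have ha : 0 < r ^ n := pow_pos hr0 n
    have hb : r ^ n ≤ 1 := pow_le_one₀ hr0.le hr1.le
    have h1 := mul_nonpos_of_nonneg_of_nonpos ha.le (Real.log_nonpos ha.le hb)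
    have h2 := mul_nonpos_of_nonneg_of_nonpos (sub_nonneg.2 hb)
      (Real.log_nonpos (sub_nonneg.2 hb) (by linarith))
    linarith
end

section
/- Let Ω be a separable metric space in which every Borel probability measure is Radon. Fix ρ⁰ ∈ P(Ω) and points x_i ∈ Ω (i = 1,…,n, n ≥ 1) such that the empirical measures L_n⁰ := (1/n)Σ_{i=1}^n δ_{x_i} converge narrowly to ρ⁰ as n → ∞. Let ζ : Ω → P(Ω), x ↦ ζ^x, be continuous with respect to the narrow topology, and for each n let Y₁,…,Y_n be independent Ω-valued random variables with Y_i distributed according to ζ^{x_i}. Define the pair empirical measure M_n := (1/n)Σ_{i=1}^n δ_{(x_i,Y_i)} ∈ P(Ω×Ω) and the measure p(dx dy) := ρ⁰(dx) ζ^x(dy). Then the sequence (M_n) satisfies the large-deviation principle in P(Ω×Ω) (with the narrow topology) with speed n and rate functional I(q) := H(q|p) if the first marginal of q equals ρ⁰, and I(q) := +∞ otherwise. -/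
open MeasureTheory Filter Topology Set
open scoped ENNReal NNReal Classical

noncomputable section

/-- A separable (pseudo)metric space is second countable. -/
instance (priority := 50) secondCountable_of_sep {Ω : Type*} [MetricSpace Ω]
    [TopologicalSpace.SeparableSpace Ω] : SecondCountableTopology Ω :=
  UniformSpace.secondCountable_of_separable Ω

/-- The measurable structure on the space of probability measures (as a subtype
of measures). -/
noncomputable instance probMeasurableSpace {Ω : Type*} [MeasurableSpace Ω] :
    MeasurableSpace (ProbabilityMeasure Ω) :=
  show MeasurableSpace {μ : Measure Ω // IsProbabilityMeasure μ} from inferInstance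

/-- Relative entropy `H(q|p) = ∫ log(dq/dp) dq ∈ [0,∞]` for probability
measures: `+∞` if `q` is not absolutely continuous w.r.t. `p` (or the integral
does not exist). -/
noncomputable def relEntNN {α : Type*} [MeasurableSpace α] (q p : Measure α) : ℝ≥0∞ :=
  if q ≪ p ∧ Integrable (fun x => Real.log ((q.rnDeriv p x).toReal)) q
  then ENNReal.ofReal (∫ x, Real.log ((q.rnDeriv p x).toReal) ∂q) else ⊤

/-- The large-deviation principle with speed `n` for the laws `μ n` of a
sequence of random variables with values in a topological space `X`, with rate
functional `J`: good rate functional, lower bound on open sets, upper bound on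
closed sets. -/
def IsLDP {X : Type*} [TopologicalSpace X] [MeasurableSpace X]
    (μ : ℕ → Measure X) (J : X → ℝ≥0∞) : Prop :=
  ((∃ x, J x ≠ ⊤) ∧ ∀ c : ℝ≥0∞, c ≠ ⊤ → IsCompact {x | J x ≤ c}) ∧
  (∀ U : Set X, IsOpen U →
    (-(((⨅ x ∈ U, J x) : ℝ≥0∞) : EReal)) ≤
      liminf (fun n : ℕ => (((n : ℝ)⁻¹ : ℝ) : EReal) * ENNReal.log (μ n U)) atTop) ∧
  (∀ C : Set X, IsClosed C →
    limsup (fun n : ℕ => (((n : ℝ)⁻¹ : ℝ) : EReal) * ENNReal.log (μ n C)) atTop ≤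
      (-(((⨅ x ∈ C, J x) : ℝ≥0∞) : EReal)))

lemma approx_bcf {E : Type*} [TopologicalSpace E] [TopologicalSpace.PseudoMetrizableSpace E]
    [MeasurableSpace E] [BorelSpace E] (m : Measure E) [IsFiniteMeasure m]
    (F : E → ℝ) (hF : Measurable F) (M : ℝ) (hM : ∀ e, |F e| ≤ M) (hM0 : 0 ≤ M) :
    ∃ f : ℕ → BoundedContinuousFunction E ℝ, (∀ k e, |f k e| ≤ M) ∧
      ∀ᵐ e ∂m, Tendsto (fun k => f k e) atTop (𝓝 (F e)) := by
  let _ := TopologicalSpace.pseudoMetrizableSpacePseudoMetric E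
  have hmem : MemLp F 1 m := (MemLp.of_bound hF.aestronglyMeasurable M
    (Eventually.of_forall hM))
  have h1 : ∀ k : ℕ, ∃ g : BoundedContinuousFunction E ℝ,
      eLpNorm (F - (g : E → ℝ)) 1 m ≤ ENNReal.ofReal (1 / ((k : ℝ) + 1)) ∧ MemLp g 1 m := fun k =>
    hmem.exists_boundedContinuous_eLpNorm_sub_le (by simp) (by simp; positivity)
  choose g hg _ using h1
  have h2 : TendstoInMeasure m (fun k => (g k : E → ℝ)) atTop F := by
    refine tendstoInMeasure_of_tendsto_eLpNorm (p := 1) (by simp)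
      (fun n => (g n).continuous.measurable.aestronglyMeasurable) hF.aestronglyMeasurable ?_
    have h3 : Tendsto (fun k : ℕ => ENNReal.ofReal (1 / ((k : ℝ) + 1))) atTop (𝓝 0) := by
      have := ENNReal.tendsto_ofReal (tendsto_one_div_add_atTop_nhds_zero_nat (𝕜 := ℝ))
      simpa using this
    refine tendsto_of_tendsto_of_tendsto_of_le_of_le tendsto_const_nhds h3 (fun _ => zero_le) ?_
    intro k
    change eLpNorm (⇑(g k) - F) 1 m ≤ _
    rw [← eLpNorm_neg, neg_sub]
    exact hg k
  obtain ⟨ns, _, hns⟩ := h2.exists_seq_tendsto_ae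
  refine ⟨fun k => BoundedContinuousFunction.ofNormedAddCommGroup
    (fun e => max (-M) (min (g (ns k) e) M)) (by fun_prop) M ?_, ?_, ?_⟩
  · intro e
    rw [Real.norm_eq_abs, abs_le]
    exact ⟨le_max_left _ _, max_le (by linarith) (min_le_right _ _)⟩
  · intro k e
    simp only [BoundedContinuousFunction.coe_ofNormedAddCommGroup]
    rw [abs_le]
    exact ⟨le_max_left _ _, max_le (by linarith) (min_le_right _ _)⟩
  · filter_upwards [hns] with e he
    simp only [BoundedContinuousFunction.coe_ofNormedAddCommGroup]
    have h4 := (tendsto_const_nhds (x := -M)).max (he.min (tendsto_const_nhds (x := M)))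
    have h5 := abs_le.1 (hM e)
    rwa [min_eq_left h5.2, max_eq_right h5.1] at h4

lemma integrable_bdd {E : Type*} [MeasurableSpace E] (m : Measure E) [IsFiniteMeasure m]
    {F : E → ℝ} (hF : Measurable F) {M : ℝ} (hM : ∀ e, |F e| ≤ M) : Integrable F m :=
  Integrable.of_bound hF.aestronglyMeasurable M (Eventually.of_forall hM)

lemma abs_exp_le {a M : ℝ} (h : |a| ≤ M) : |Real.exp a| ≤ Real.exp M := by
  rw [Real.abs_exp]; exact Real.exp_le_exp.2 (le_of_abs_le h)

lemma DV_meas {E : Type*} [TopologicalSpace E] [TopologicalSpace.PseudoMetrizableSpace E]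
    [MeasurableSpace E] [BorelSpace E] (p q : Measure E) [IsProbabilityMeasure p]
    [IsProbabilityMeasure q] (c : ℝ)
    (h : ∀ F : BoundedContinuousFunction E ℝ,
      ∫ e, F e ∂q ≤ c + Real.log (∫ e, Real.exp (F e) ∂p))
    (F : E → ℝ) (hF : Measurable F) (M : ℝ) (hM : ∀ e, |F e| ≤ M) (hM0 : 0 ≤ M) :
    ∫ e, F e ∂q ≤ c + Real.log (∫ e, Real.exp (F e) ∂p) := by
  obtain ⟨f, hfM, hf⟩ := approx_bcf (p + q) F hF M hM hM0
  rw [ae_add_measure_iff] at hf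
  have h1 : Tendsto (fun k => ∫ e, f k e ∂q) atTop (𝓝 (∫ e, F e ∂q)) :=
    tendsto_integral_of_dominated_convergence (fun _ => M)
      (fun k => (f k).continuous.measurable.aestronglyMeasurable) (integrable_const _)
      (fun k => Eventually.of_forall (hfM k)) hf.2
  have h2 : Tendsto (fun k => ∫ e, Real.exp (f k e) ∂p) atTop (𝓝 (∫ e, Real.exp (F e) ∂p)) :=
    tendsto_integral_of_dominated_convergence (fun _ => Real.exp M)
      (fun k => (Real.continuous_exp.comp (f k).continuous).measurable.aestronglyMeasurable)
      (integrable_const _)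
      (fun k => Eventually.of_forall fun e => abs_exp_le (hfM k e))
      (by filter_upwards [hf.1] with e he using (Real.continuous_exp.tendsto _).comp he)
  have h3 : 0 < ∫ e, Real.exp (F e) ∂p := integral_exp_pos
    (integrable_bdd p (Real.measurable_exp.comp hF) (fun e => abs_exp_le (hM e)))
  exact le_of_tendsto_of_tendsto' h1 ((h2.log h3.ne').const_add c) (fun k => h (f k))

lemma DV_hard {E : Type*} [TopologicalSpace E] [TopologicalSpace.PseudoMetrizableSpace E]
    [MeasurableSpace E] [BorelSpace E] (p q : Measure E) [IsProbabilityMeasure p]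
    [IsProbabilityMeasure q] (c : ℝ)
    (h : ∀ F : BoundedContinuousFunction E ℝ,
      ∫ e, F e ∂q ≤ c + Real.log (∫ e, Real.exp (F e) ∂p)) :
    q ≪ p ∧ Integrable (fun e => Real.log ((q.rnDeriv p e).toReal)) q ∧
      ∫ e, Real.log ((q.rnDeriv p e).toReal) ∂q ≤ c := by
  have hm := DV_meas p q c h
  have hac : q ≪ p := by
    refine Measure.AbsolutelyContinuous.mk fun A hA hpA => ?_
    by_contra hne
    have hpos : 0 < q.real A := by
      rw [measureReal_def]; exact ENNReal.toReal_pos hne (measure_ne_top _ _)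
    have key : ∀ t : ℝ, 0 ≤ t → t * q.real A ≤ c := by
      intro t ht
      have h1 := hm (A.indicator fun _ => t) (measurable_const.indicator hA) t
        (by intro e; by_cases he : e ∈ A <;> simp [he, abs_of_nonneg ht, ht]) ht
      have h2 : ∫ e, Real.exp (A.indicator (fun _ => t) e) ∂p = 1 := by
        have : (fun e => Real.exp (A.indicator (fun _ => t) e)) =ᵐ[p] fun _ => 1 := by
          filter_upwards [measure_eq_zero_iff_ae_notMem.1 hpA] with e he
          simp [he]
        rw [integral_congr_ae this]; simp
      rw [h2, integral_indicator_const t hA] at h1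
      simp only [smul_eq_mul, Real.log_one, add_zero] at h1
      linarith
    have := key ((|c| + 1) / q.real A) (by positivity)
    rw [div_mul_cancel₀ _ hpos.ne'] at this
    linarith [le_abs_self c]
  refine ⟨hac, ?_⟩
  set g : E → ℝ := fun e => (q.rnDeriv p e).toReal with hg
  have hgm : Measurable g := (Measure.measurable_rnDeriv q p).ennreal_toReal
  have hg0 : ∀ e, 0 ≤ g e := fun e => ENNReal.toReal_nonneg
  have hgi : Integrable g p := Measure.integrable_toReal_rnDeriv
  have hg1 : ∫ e, g e ∂p = 1 := by
    rw [Measure.integral_toReal_rnDeriv hac]; simp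
  have hlogm : Measurable (fun e => Real.log (g e)) := Real.measurable_log.comp hgm
  set F : ℕ → E → ℝ := fun M e => max (-(M : ℝ)) (min (Real.log (g e)) M) with hF
  have hFm : ∀ M, Measurable (F M) := fun M => measurable_const.max (hlogm.min measurable_const)
  have hFM : ∀ M e, |F M e| ≤ (M : ℝ) := fun M e => by
    rw [abs_le]
    exact ⟨le_max_left _ _, max_le (by have : (0 : ℝ) ≤ M := by positivity
                                       linarith) (min_le_right _ _)⟩
  have hgpos : ∀ᵐ e ∂q, 0 < g e := by
    filter_upwards [Measure.rnDeriv_pos hac, hac.ae_le (Measure.rnDeriv_lt_top q p)] with e h1 h2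
    exact ENNReal.toReal_pos h1.ne' h2.ne
  have hgpos' : ∀ᵐ e ∂p, g e = 0 ∨ 0 < g e := Eventually.of_forall fun e => by
    rcases (hg0 e).eq_or_lt with h | h
    · exact Or.inl h.symm
    · exact Or.inr h
  -- bound of the partition function; note `log 0 = 0`, so bound by g + 1 + indicator
  have hexp : ∀ (M : ℕ) e, 0 < g e → Real.exp (F M e) ≤ g e + Real.exp (-(M : ℝ)) := by
    intro M e he
    have h1 : F M e ≤ max (-(M : ℝ)) (Real.log (g e)) := max_le_max le_rfl (min_le_left _ _)
    calc Real.exp (F M e) ≤ Real.exp (max (-(M : ℝ)) (Real.log (g e))) := Real.exp_le_exp.2 h1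
      _ = max (Real.exp (-(M : ℝ))) (Real.exp (Real.log (g e))) :=
          Real.exp_monotone.map_max
      _ ≤ _ := by
          rw [Real.exp_log he]
          exact max_le (by linarith) (by linarith [Real.exp_pos (-(M : ℝ))])
  -- modified function: −M on {g = 0}
  set F' : ℕ → E → ℝ := fun M e => if g e = 0 then -(M : ℝ) else F M e with hF'
  have hF'm : ∀ M, Measurable (F' M) := fun M =>
    Measurable.ite (hgm (measurableSet_singleton 0)) measurable_const (hFm M)
  have hF'M : ∀ M e, |F' M e| ≤ (M : ℝ) := fun M e => by
    by_cases h : g e = 0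
    · simp [hF', h]
    · simpa [hF', h] using hFM M e
  have hexp' : ∀ (M : ℕ) e, Real.exp (F' M e) ≤ g e + Real.exp (-(M : ℝ)) := by
    intro M e
    by_cases h : g e = 0
    · simp [hF', h]
    · simp only [hF', h, if_false]
      exact hexp M e (lt_of_le_of_ne (hg0 e) (Ne.symm h))
  have hFF' : ∀ M, F' M =ᵐ[q] F M := fun M => by
    filter_upwards [hgpos] with e he
    simp [hF', he.ne']
  have hbound : ∀ M : ℕ, ∫ e, F M e ∂q ≤ c + Real.log (1 + Real.exp (-(M : ℝ))) := by
    intro M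
    rw [← integral_congr_ae (hFF' M)]
    refine (hm (F' M) (hF'm M) M (hF'M M) (by positivity)).trans ?_
    have hi : Integrable (fun e => Real.exp (F' M e)) p :=
      integrable_bdd p (Real.measurable_exp.comp (hF'm M)) (fun e => abs_exp_le (hF'M M e))
    have : ∫ e, Real.exp (F' M e) ∂p ≤ 1 + Real.exp (-(M : ℝ)) := by
      calc _ ≤ ∫ e, (g e + Real.exp (-(M : ℝ))) ∂p :=
            integral_mono hi (hgi.add (integrable_const _)) (hexp' M)
        _ = _ := by rw [integral_add hgi (integrable_const _), hg1]; simp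
    gcongr
    exact integral_exp_pos hi
  have hFabs : ∀ M e, |F M e| ≤ |Real.log (g e)| := by
    intro M e
    have hM : (0 : ℝ) ≤ M := by positivity
    simp only [hF]
    rcases le_total 0 (Real.log (g e)) with h | h
    · have h1 : 0 ≤ min (Real.log (g e)) M := le_min h hM
      rw [max_eq_right (by linarith), abs_of_nonneg h1, abs_of_nonneg h]; exact min_le_left _ _
    · rw [min_eq_left (by linarith), abs_of_nonpos h, abs_of_nonpos (max_le (by linarith) h)]
      linarith [le_max_right (-(M : ℝ)) (Real.log (g e))]
  have hFlim : ∀ e, Tendsto (fun M : ℕ => F M e) atTop (𝓝 (Real.log (g e))) := by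
    intro e
    refine tendsto_const_nhds.congr' ?_
    filter_upwards [tendsto_natCast_atTop_atTop.eventually_ge_atTop |Real.log (g e)|] with M hM
    have := abs_le.1 hM
    simp only [hF]
    rw [min_eq_left this.2, max_eq_right this.1]
  -- negative part
  have hneg : ∀ M : ℕ, ∫ e, max (-F M e) 0 ∂q ≤ 1 := by
    intro M
    have hi2 : Integrable (fun e => g e • max (-F M e) 0) p := by
      refine (integrable_rnDeriv_smul_iff hac).2 ?_
      exact integrable_bdd q ((hFm M).neg.max measurable_const) (M := M) fun e => by
        rw [abs_of_nonneg (le_max_right _ _)]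
        exact max_le (by linarith [(abs_le.1 (hFM M e)).1]) (by positivity)
    rw [← integral_rnDeriv_smul hac]
    have h1 : ∀ e, g e • max (-F M e) 0 ≤ 1 := by
      intro e
      simp only [smul_eq_mul]
      rcases (hg0 e).eq_or_lt with h0 | h0
      · rw [← h0]; simp
      have h2 : max (-F M e) 0 ≤ max (-Real.log (g e)) 0 := by
        rcases le_total 0 (Real.log (g e)) with h | h
        · have : 0 ≤ F M e := le_max_of_le_right (le_min h (by positivity))
          simp [this]
        · have := hFabs M e
          rw [abs_of_nonpos h] at this
          exact max_le_max ((neg_le_abs _).trans this) le_rfl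
      have h3 : g e * max (-Real.log (g e)) 0 ≤ 1 := by
        rcases le_total (-Real.log (g e)) 0 with h | h
        · rw [max_eq_right h]; simp
        · rw [max_eq_left h]
          have h4 := Real.one_sub_inv_le_log_of_pos h0
          have h5 : g e * (g e)⁻¹ = 1 := mul_inv_cancel₀ h0.ne'
          nlinarith
      exact (mul_le_mul_of_nonneg_left h2 (hg0 e)).trans h3
    calc _ ≤ ∫ e, (1 : ℝ) ∂p := integral_mono hi2 (integrable_const _) h1
      _ = 1 := by simp
  have habs : ∀ M : ℕ, ∫ e, |F M e| ∂q ≤ c + Real.log 2 + 2 := by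
    intro M
    have hFi : Integrable (F M) q := integrable_bdd q (hFm M) (hFM M)
    have e1 : ∀ e, |F M e| = F M e + 2 * max (-F M e) 0 := fun e => by
      rcases le_total 0 (F M e) with h | h
      · rw [abs_of_nonneg h, max_eq_right (by linarith)]; ring
      · rw [abs_of_nonpos h, max_eq_left (by linarith)]; ring
    have hni : Integrable (fun e => max (-F M e) 0) q := hFi.neg.pos_part
    rw [integral_congr_ae (Eventually.of_forall e1), integral_add hFi (hni.const_mul 2),
      integral_const_mul]
    have := hneg M
    have h3 := hbound M
    have : Real.log (1 + Real.exp (-(M : ℝ))) ≤ Real.log 2 := by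
      gcongr
      have : Real.exp (-(M : ℝ)) ≤ 1 := Real.exp_le_one_iff.2 (by simp)
      linarith
    linarith
  have hint : Integrable (fun e => Real.log (g e)) q := by
    refine ⟨hlogm.aestronglyMeasurable, ?_⟩
    rw [hasFiniteIntegral_iff_norm]
    have hfatou := lintegral_liminf_le (u := atTop) (μ := q) (f := fun M e => ENNReal.ofReal ‖F M e‖)
      (fun M => ((hFm M).norm).ennreal_ofReal)
    have h1 : ∀ e, liminf (fun M => ENNReal.ofReal ‖F M e‖) atTop
        = ENNReal.ofReal ‖Real.log (g e)‖ := fun e =>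
      (ENNReal.tendsto_ofReal (hFlim e).norm).liminf_eq
    simp_rw [h1] at hfatou
    refine lt_of_le_of_lt (hfatou.trans (b := _) ?_) (ENNReal.ofReal_lt_top (r := c + Real.log 2 + 2))
    refine liminf_le_of_le (by isBoundedDefault) fun b hb => ?_
    obtain ⟨M, hM⟩ := hb.exists
    refine hM.trans ?_
    rw [← ofReal_integral_eq_lintegral_ofReal (integrable_bdd q (hFm M) (hFM M)).norm
      (Eventually.of_forall fun _ => norm_nonneg _)]
    exact ENNReal.ofReal_le_ofReal (habs M)
  refine ⟨hint, ?_⟩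
  have h1 : Tendsto (fun M : ℕ => ∫ e, F M e ∂q) atTop (𝓝 (∫ e, Real.log (g e) ∂q)) :=
    tendsto_integral_of_dominated_convergence (fun e => |Real.log (g e)|)
      (fun k => (hFm k).aestronglyMeasurable) hint.abs
      (fun k => Eventually.of_forall (hFabs k)) (Eventually.of_forall hFlim)
  have h2 : Tendsto (fun M : ℕ => c + Real.log (1 + Real.exp (-(M : ℝ)))) atTop (𝓝 c) := by
    have h3 : Tendsto (fun M : ℕ => Real.exp (-(M : ℝ))) atTop (𝓝 0) :=
      Real.tendsto_exp_neg_atTop_nhds_zero.comp tendsto_natCast_atTop_atTop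
    have := ((h3.const_add 1).log (by norm_num)).const_add c
    simpa using this
  exact le_of_tendsto_of_tendsto' h1 h2 hbound

set_option linter.unusedSectionVars false

lemma exists_inducing_cube (Ω : Type*) [MetricSpace Ω] [TopologicalSpace.SeparableSpace Ω] :
    ∃ φ : Ω → (ℕ → unitInterval), IsInducing φ := by
  rcases isEmpty_or_nonempty Ω with h | h
  · exact ⟨fun x => (h.false x).elim, isInducing_iff_nhds.2 fun x => (h.false x).elim⟩
  let u := TopologicalSpace.denseSeq Ω
  have hu : DenseRange u := TopologicalSpace.denseRange_denseSeq Ω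
  let φ : Ω → (ℕ → unitInterval) := fun x k =>
    ⟨min 1 (dist x (u k)), le_min zero_le_one dist_nonneg, min_le_left _ _⟩
  have hφ : Continuous φ := by
    refine continuous_pi fun k => Continuous.subtype_mk (by fun_prop) _
  refine ⟨φ, isInducing_iff_nhds.2 fun x => le_antisymm (map_le_iff_le_comap.1 hφ.continuousAt) ?_⟩
  refine Metric.nhds_basis_ball.ge_iff.2 fun ε hε => ?_
  set δ := min ε 1 / 2 with hδ
  have hδ0 : 0 < δ := by positivity
  have hδ1 : δ < 1 := by have := min_le_right ε 1; linarith
  have hδε : 2 * δ ≤ ε := by have := min_le_left ε 1; linarith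
  obtain ⟨k, hk⟩ := hu.exists_dist_lt x hδ0
  refine mem_comap.2 ⟨{z | ((z k : unitInterval) : ℝ) < δ}, ?_, ?_⟩
  · refine IsOpen.mem_nhds (isOpen_lt (by fun_prop) continuous_const) ?_
    exact (min_le_right _ _).trans_lt hk
  · intro y hy
    have hy' : min 1 (dist y (u k)) < δ := hy
    rcases min_lt_iff.1 hy' with h | h
    · linarith
    · rw [Metric.mem_ball]
      calc dist y x ≤ dist y (u k) + dist x (u k) := dist_triangle_right _ _ _
        _ < ε := by linarith

lemma inducing_map {E K : Type*} [TopologicalSpace E] [MeasurableSpace E] [BorelSpace E]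
    [TopologicalSpace.PseudoMetrizableSpace E]
    [TopologicalSpace K] [TopologicalSpace.MetrizableSpace K] [TopologicalSpace.SeparableSpace K]
    [MeasurableSpace K] [BorelSpace K] (ι : E → K) (hι : IsInducing ι) :
    IsInducing (fun q : ProbabilityMeasure E =>
      q.map (f := ι) hι.continuous.measurable.aemeasurable) := by
  refine isInducing_iff_nhds.2 fun q => le_antisymm
    (map_le_iff_le_comap.1 (ProbabilityMeasure.continuous_map hι.continuous).continuousAt) ?_
  set T := (fun q : ProbabilityMeasure E =>
      q.map (f := ι) hι.continuous.measurable.aemeasurable) with hT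
  have : Tendsto (fun r : ProbabilityMeasure E => r) (comap T (𝓝 (T q))) (𝓝 q) := by
    refine tendsto_of_forall_isOpen_le_liminf' fun G hG => ?_
    obtain ⟨G', hG', rfl⟩ := hι.isOpen_iff.1 hG
    have h1 := ProbabilityMeasure.le_liminf_measure_open_of_tendsto
      (tendsto_comap (f := T) (x := 𝓝 (T q))) hG'
    have h2 : ∀ r : ProbabilityMeasure E, (T r : Measure K) G' = (r : Measure E) (ι ⁻¹' G') :=
      fun r => Measure.map_apply hι.continuous.measurable hG'.measurableSet
    simp_rw [h2] at h1
    exact h1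
  simpa [Tendsto] using this

section
variable {Ω : Type*} [MetricSpace Ω] [TopologicalSpace.SeparableSpace Ω]
    [MeasurableSpace Ω] [BorelSpace Ω]

def kap (ζ : Ω → ProbabilityMeasure Ω) (hζ : Continuous ζ) : ProbabilityTheory.Kernel Ω Ω :=
  ⟨fun a => (ζ a : Measure Ω), by
    refine Measurable.measure_of_isPiSystem_of_isProbabilityMeasure
      (borel_eq_generateFrom_isClosed (α := Ω) ▸ BorelSpace.measurable_eq) isPiSystem_isClosed ?_
    intro F hF
    have hF' : IsClosed F := hF
    refine measurable_of_tendsto_metrizable (f := fun n a => ∫⁻ x, hF'.apprSeq n x ∂(ζ a : Measure Ω))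
      ?_ ?_
    · intro n
      exact ((ProbabilityMeasure.continuous_lintegral_boundedContinuousFunction
        (hF'.apprSeq n)).comp hζ).measurable
    · rw [tendsto_pi_nhds]
      intro a
      exact HasOuterApproxClosed.tendsto_lintegral_apprSeq hF' (ζ a : Measure Ω)⟩

lemma kap_apply (ζ : Ω → ProbabilityMeasure Ω) (hζ : Continuous ζ) (a : Ω) :
    kap ζ hζ a = (ζ a : Measure Ω) := rfl

instance (ζ : Ω → ProbabilityMeasure Ω) (hζ : Continuous ζ) :
    ProbabilityTheory.IsMarkovKernel (kap ζ hζ) := ⟨fun a => by rw [kap_apply]; infer_instance⟩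

open ProbabilityTheory in
lemma bind_eq (ζ : Ω → ProbabilityMeasure Ω) (hζ : Continuous ζ) (ρ0 : ProbabilityMeasure Ω) :
    (ρ0 : Measure Ω).bind (fun a => ((ζ a : Measure Ω)).map (Prod.mk a)) =
      (ρ0 : Measure Ω) ⊗ₘ (kap ζ hζ) := by
  rw [Measure.compProd_eq_comp_prod]
  congr 1
  funext a
  rw [Kernel.prod_apply, Kernel.id_apply, Measure.dirac_prod, kap_apply]

lemma cont_int (ζ : Ω → ProbabilityMeasure Ω) (hζ : Continuous ζ)
    (F : BoundedContinuousFunction (Ω × Ω) ℝ) :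
    Continuous fun a => ∫ y, F (a, y) ∂(ζ a : Measure Ω) := by
  have h1 : Continuous fun a => (diracProba a).prod (ζ a) :=
    ProbabilityMeasure.continuous_prod.comp (continuous_diracProba.prodMk hζ)
  have h2 := (ProbabilityMeasure.continuous_integral_boundedContinuousFunction F).comp h1
  refine h2.congr fun a => ?_
  simp only [Function.comp, ProbabilityMeasure.toMeasure_prod]
  have : ((diracProba a : ProbabilityMeasure Ω) : Measure Ω) = Measure.dirac a := rfl
  rw [this, Measure.dirac_prod, integral_map (by fun_prop)
    F.continuous.measurable.aestronglyMeasurable]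

lemma abs_le_norm (F : BoundedContinuousFunction (Ω × Ω) ℝ) (e : Ω × Ω) : |F e| ≤ ‖F‖ :=
  F.norm_coe_le_norm e

/-- exponential of a bounded continuous function -/
def expB {E : Type*} [TopologicalSpace E] (F : BoundedContinuousFunction E ℝ) :
    BoundedContinuousFunction E ℝ :=
  BoundedContinuousFunction.ofNormedAddCommGroup (fun e => Real.exp (F e)) (by fun_prop)
    (Real.exp ‖F‖) (fun e => abs_exp_le (F.norm_coe_le_norm e))

def Zf (ζ : Ω → ProbabilityMeasure Ω) (F : Ω × Ω → ℝ) (a : Ω) : ℝ :=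
  ∫ y, Real.exp (F (a, y)) ∂(ζ a : Measure Ω)

lemma Zf_integrable (ζ : Ω → ProbabilityMeasure Ω) (F : BoundedContinuousFunction (Ω × Ω) ℝ)
    (a : Ω) : Integrable (fun y => Real.exp (F (a, y))) (ζ a : Measure Ω) :=
  integrable_bdd _ (by fun_prop : Continuous fun y => Real.exp (F (a, y))).measurable
    (fun y => abs_exp_le (abs_le_norm F (a, y)))

lemma Zf_bounds (ζ : Ω → ProbabilityMeasure Ω) (F : BoundedContinuousFunction (Ω × Ω) ℝ) (a : Ω) :
    Real.exp (-‖F‖) ≤ Zf ζ F a ∧ Zf ζ F a ≤ Real.exp ‖F‖ := by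
  have hi := Zf_integrable ζ F a
  constructor
  · have := integral_mono (integrable_const (Real.exp (-‖F‖))) hi fun y =>
      Real.exp_le_exp.2 (abs_le.1 (abs_le_norm F (a, y))).1
    simpa [Zf] using this
  · have := integral_mono hi (integrable_const (Real.exp (‖F‖))) fun y =>
      Real.exp_le_exp.2 (abs_le.1 (abs_le_norm F (a, y))).2
    simpa [Zf] using this

lemma Zf_pos (ζ : Ω → ProbabilityMeasure Ω) (F : BoundedContinuousFunction (Ω × Ω) ℝ) (a : Ω) :
    0 < Zf ζ F a := (Real.exp_pos _).trans_le (Zf_bounds ζ F a).1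

lemma log_Zf_bound (ζ : Ω → ProbabilityMeasure Ω) (F : BoundedContinuousFunction (Ω × Ω) ℝ)
    (a : Ω) : |Real.log (Zf ζ F a)| ≤ ‖F‖ := by
  rw [abs_le]
  have h := Zf_bounds ζ F a
  exact ⟨(Real.le_log_iff_exp_le (Zf_pos ζ F a)).2 h.1, (Real.log_le_iff_le_exp (Zf_pos ζ F a)).2 h.2⟩

lemma Zf_cont (ζ : Ω → ProbabilityMeasure Ω) (hζ : Continuous ζ)
    (F : BoundedContinuousFunction (Ω × Ω) ℝ) : Continuous (Zf ζ F) :=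
  cont_int ζ hζ (expB F)

def logZ (ζ : Ω → ProbabilityMeasure Ω) (hζ : Continuous ζ)
    (F : BoundedContinuousFunction (Ω × Ω) ℝ) : BoundedContinuousFunction Ω ℝ :=
  BoundedContinuousFunction.ofNormedAddCommGroup (fun a => Real.log (Zf ζ F a))
    ((Zf_cont ζ hζ F).log fun a => (Zf_pos ζ F a).ne') ‖F‖ (log_Zf_bound ζ F)

lemma logZ_apply (ζ : Ω → ProbabilityMeasure Ω) (hζ : Continuous ζ)
    (F : BoundedContinuousFunction (Ω × Ω) ℝ) (a : Ω) :
    logZ ζ hζ F a = Real.log (Zf ζ F a) := rfl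

def Lam (ζ : Ω → ProbabilityMeasure Ω) (hζ : Continuous ζ) (ρ0 : ProbabilityMeasure Ω)
    (F : BoundedContinuousFunction (Ω × Ω) ℝ) : ℝ := ∫ a, logZ ζ hζ F a ∂(ρ0 : Measure Ω)

open ProbabilityTheory in
lemma Lam_le (ζ : Ω → ProbabilityMeasure Ω) (hζ : Continuous ζ) (ρ0 : ProbabilityMeasure Ω)
    (F : BoundedContinuousFunction (Ω × Ω) ℝ) :
    Lam ζ hζ ρ0 F ≤ Real.log (∫ e, Real.exp (F e) ∂((ρ0 : Measure Ω) ⊗ₘ kap ζ hζ)) := by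
  have hi : Integrable (fun e => Real.exp (F e)) ((ρ0 : Measure Ω) ⊗ₘ kap ζ hζ) :=
    (expB F).integrable _
  have h1 : ∫ e, Real.exp (F e) ∂((ρ0 : Measure Ω) ⊗ₘ kap ζ hζ)
      = ∫ a, Zf ζ F a ∂(ρ0 : Measure Ω) := by
    rw [Measure.integral_compProd hi]; rfl
  set I := ∫ e, Real.exp (F e) ∂((ρ0 : Measure Ω) ⊗ₘ kap ζ hζ)
  have hpos : 0 < I := integral_exp_pos hi
  have hZi : Integrable (Zf ζ F) (ρ0 : Measure Ω) :=
    integrable_bdd _ (Zf_cont ζ hζ F).measurable (M := Real.exp ‖F‖) fun a => by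
      rw [abs_of_pos (Zf_pos ζ F a)]; exact (Zf_bounds ζ F a).2
  have h2 : ∀ a, logZ ζ hζ F a ≤ Real.log I + (Zf ζ F a / I - 1) := fun a => by
    have := Real.log_le_sub_one_of_pos (div_pos (Zf_pos ζ F a) hpos)
    rw [Real.log_div (Zf_pos ζ F a).ne' hpos.ne'] at this
    rw [logZ_apply]; linarith
  have hi2 : Integrable (fun a => Zf ζ F a / I - 1) (ρ0 : Measure Ω) :=
    (hZi.div_const I).sub (integrable_const _)
  have h3 : ∫ a, logZ ζ hζ F a ∂(ρ0 : Measure Ω) ≤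
      ∫ a, (Real.log I + (Zf ζ F a / I - 1)) ∂(ρ0 : Measure Ω) :=
    integral_mono ((logZ ζ hζ F).integrable (ρ0 : Measure Ω)) ((integrable_const _).add hi2) h2
  have h4 : ∫ a, (Real.log I + (Zf ζ F a / I - 1)) ∂(ρ0 : Measure Ω) = Real.log I := by
    rw [integral_add (integrable_const _) hi2,
      integral_sub (hZi.div_const I) (integrable_const _), integral_div, ← h1]
    simp [div_self hpos.ne']
  exact h3.trans h4.le

/-- normalised function `F - log Z` -/
def nrm (ζ : Ω → ProbabilityMeasure Ω) (hζ : Continuous ζ)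
    (F : BoundedContinuousFunction (Ω × Ω) ℝ) : BoundedContinuousFunction (Ω × Ω) ℝ :=
  F - (logZ ζ hζ F).compContinuous ⟨Prod.fst, continuous_fst⟩

lemma nrm_apply (ζ : Ω → ProbabilityMeasure Ω) (hζ : Continuous ζ)
    (F : BoundedContinuousFunction (Ω × Ω) ℝ) (e : Ω × Ω) :
    nrm ζ hζ F e = F e - logZ ζ hζ F e.1 := rfl

lemma nrm_exp (ζ : Ω → ProbabilityMeasure Ω) (hζ : Continuous ζ)
    (F : BoundedContinuousFunction (Ω × Ω) ℝ) (e : Ω × Ω) :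
    Real.exp (nrm ζ hζ F e) = Real.exp (F e) / Zf ζ F e.1 := by
  rw [nrm_apply, logZ_apply, Real.exp_sub, Real.exp_log (Zf_pos ζ F _)]

lemma Zf_nrm (ζ : Ω → ProbabilityMeasure Ω) (hζ : Continuous ζ)
    (F : BoundedContinuousFunction (Ω × Ω) ℝ) (a : Ω) : Zf ζ (nrm ζ hζ F) a = 1 := by
  unfold Zf
  simp_rw [nrm_exp]
  rw [integral_div]
  exact div_self (Zf_pos ζ F a).ne'

lemma DV_easy {E : Type*} [MeasurableSpace E] (p q : Measure E) [IsProbabilityMeasure p]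
    [IsProbabilityMeasure q] (hac : q ≪ p)
    (hi : Integrable (fun e => Real.log ((q.rnDeriv p e).toReal)) q) (G : E → ℝ)
    (hG : Measurable G) (M : ℝ) (hM : ∀ e, |G e| ≤ M) (h1 : ∫ e, Real.exp (G e) ∂p = 1) :
    ∫ e, G e ∂q ≤ ∫ e, Real.log ((q.rnDeriv p e).toReal) ∂q := by
  have hGq := integrable_bdd q hG hM
  have hGp : Integrable (fun e => Real.exp (G e)) p :=
    integrable_bdd p (Real.measurable_exp.comp hG) fun e => abs_exp_le (hM e)
  have h2 := integral_llr_tilted_right hac hGq hGp hi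
  rw [h1, Real.log_one, add_zero] at h2
  have hac2 : q ≪ p.tilted G := hac.trans (absolutelyContinuous_tilted hGp)
  have : IsProbabilityMeasure (p.tilted G) := isProbabilityMeasure_tilted hGp
  have h3 := InformationTheory.toReal_klDiv_of_measure_eq hac2 (by simp)
  have h4 : 0 ≤ ∫ a, llr q (p.tilted G) a ∂q := by rw [← h3]; exact ENNReal.toReal_nonneg
  have h5 : ∫ x, llr q p x ∂q = ∫ e, Real.log ((q.rnDeriv p e).toReal) ∂q := rfl
  linarith

open ProbabilityTheory in
lemma key2 (ζ : Ω → ProbabilityMeasure Ω) (hζ : Continuous ζ) (ρ0 : ProbabilityMeasure Ω)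
    (q : ProbabilityMeasure (Ω × Ω)) (c : ℝ) (hc : 0 ≤ c)
    (hq : (q : Measure (Ω × Ω)).map Prod.fst = (ρ0 : Measure Ω))
    (hH : relEntNN (q : Measure (Ω × Ω)) ((ρ0 : Measure Ω) ⊗ₘ kap ζ hζ) ≤ ENNReal.ofReal c)
    (F : BoundedContinuousFunction (Ω × Ω) ℝ) :
    ∫ e, F e ∂(q : Measure (Ω × Ω)) ≤ c + Lam ζ hζ ρ0 F := by
  unfold relEntNN at hH
  split_ifs at hH with h
  swap
  · simp at hH
  rw [ENNReal.ofReal_le_ofReal_iff hc] at hH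
  have h1 : ∫ e, Real.exp (nrm ζ hζ F e) ∂((ρ0 : Measure Ω) ⊗ₘ kap ζ hζ) = 1 := by
    have hi : Integrable (fun e => Real.exp (nrm ζ hζ F e)) ((ρ0 : Measure Ω) ⊗ₘ kap ζ hζ) :=
      (expB (nrm ζ hζ F)).integrable _
    rw [Measure.integral_compProd hi]
    have : ∀ a, ∫ y, Real.exp (nrm ζ hζ F (a, y)) ∂(kap ζ hζ a) = 1 := Zf_nrm ζ hζ F
    simp_rw [this]; simp
  have h2 := DV_easy _ _ h.1 h.2 (nrm ζ hζ F) (nrm ζ hζ F).continuous.measurable _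
    (abs_le_norm _) h1
  have h3 : ∫ e, nrm ζ hζ F e ∂(q : Measure (Ω × Ω)) =
      ∫ e, F e ∂(q : Measure (Ω × Ω)) - Lam ζ hζ ρ0 F := by
    simp_rw [nrm_apply]
    have hi2 : Integrable (fun e : Ω × Ω => logZ ζ hζ F e.1) (q : Measure (Ω × Ω)) :=
      ((logZ ζ hζ F).compContinuous ⟨Prod.fst, continuous_fst⟩).integrable _
    rw [integral_sub (F.integrable _) hi2]
    congr 1
    unfold Lam
    rw [← hq, integral_map (by fun_prop) (logZ ζ hζ F).continuous.measurable.aestronglyMeasurable]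
  linarith

end

abbrev Qc := ℕ → unitInterval

section
variable {Ω : Type*} [MetricSpace Ω] [TopologicalSpace.SeparableSpace Ω]
    [MeasurableSpace Ω] [BorelSpace Ω]

def pull (φ : Ω → Qc) (hφ : IsInducing φ) (F : BoundedContinuousFunction (Qc × Qc) ℝ) :
    BoundedContinuousFunction (Ω × Ω) ℝ :=
  F.compContinuous ⟨Prod.map φ φ, (hφ.prodMap hφ).continuous⟩

lemma pull_apply (φ : Ω → Qc) (hφ : IsInducing φ) (F : BoundedContinuousFunction (Qc × Qc) ℝ)
    (e : Ω × Ω) : pull φ hφ F e = F (Prod.map φ φ e) := rfl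

def Good (ζ : Ω → ProbabilityMeasure Ω) (hζ : Continuous ζ) (ρ0 : ProbabilityMeasure Ω)
    (φ : Ω → Qc) (hφ : IsInducing φ) (c : ℝ) (r : ProbabilityMeasure (Qc × Qc)) : Prop :=
  ∀ F : BoundedContinuousFunction (Qc × Qc) ℝ,
    ∫ e, F e ∂(r : Measure (Qc × Qc)) ≤ c + Lam ζ hζ ρ0 (pull φ hφ F)

lemma map_inj_of_inducing {E K : Type*} [TopologicalSpace E] [MeasurableSpace E] [BorelSpace E]
    [TopologicalSpace K] [MeasurableSpace K] [BorelSpace K] (φ : E → K) (hφ : IsInducing φ)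
    (m m' : Measure E) (h : m.map φ = m'.map φ) : m = m' := by
  have hm : Measurable φ := hφ.continuous.measurable
  ext s hs
  have : (inferInstance : MeasurableSpace E) = MeasurableSpace.comap φ inferInstance := by
    rw [BorelSpace.measurable_eq (α := E), BorelSpace.measurable_eq (α := K), hφ.eq_induced,
      borel_comap]
  have hs2 : MeasurableSet[MeasurableSpace.comap φ inferInstance] s := this ▸ hs
  obtain ⟨t, ht, rfl⟩ := hs2
  rw [← Measure.map_apply hm ht, h, Measure.map_apply hm ht]

open ProbabilityTheory in
lemma key1 (ζ : Ω → ProbabilityMeasure Ω) (hζ : Continuous ζ) (ρ0 : ProbabilityMeasure Ω)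
    (φ : Ω → Qc) (hφ : IsInducing φ) (c : ℝ) (r : ProbabilityMeasure (Qc × Qc))
    (h : Good ζ hζ ρ0 φ hφ c r) :
    ∃ q : ProbabilityMeasure (Ω × Ω),
      q.map (f := Prod.map φ φ) (hφ.prodMap hφ).continuous.measurable.aemeasurable = r ∧
      (q : Measure (Ω × Ω)).map Prod.fst = (ρ0 : Measure Ω) ∧
      relEntNN (q : Measure (Ω × Ω)) ((ρ0 : Measure Ω) ⊗ₘ kap ζ hζ) ≤ ENNReal.ofReal c := by
  set p : Measure (Ω × Ω) := (ρ0 : Measure Ω) ⊗ₘ kap ζ hζ with hp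
  have hι : Continuous (Prod.map φ φ) := (hφ.prodMap hφ).continuous
  have hιm : Measurable (Prod.map φ φ) := hι.measurable
  set P := p.map (Prod.map φ φ) with hP
  have : IsProbabilityMeasure P := Measure.isProbabilityMeasure_map hιm.aemeasurable
  obtain ⟨hac, hint, hle⟩ := DV_hard P (r : Measure (Qc × Qc)) c (fun F => by
    refine (h F).trans ?_
    have := Lam_le ζ hζ ρ0 (pull φ hφ F)
    rw [hP, integral_map hιm.aemeasurable
      (by fun_prop : Continuous fun e => Real.exp (F e)).measurable.aestronglyMeasurable]
    simp only [pull_apply] at this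
    linarith)
  set g := (r : Measure (Qc × Qc)).rnDeriv P with hg
  have hgm : Measurable g := Measure.measurable_rnDeriv _ _
  set q0 := p.withDensity (g ∘ Prod.map φ φ) with hq0
  have hmap : q0.map (Prod.map φ φ) = (r : Measure (Qc × Qc)) := by
    rw [← Measure.withDensity_rnDeriv_eq _ _ hac]
    ext s hs
    rw [Measure.map_apply hιm hs, withDensity_apply _ (hιm hs), withDensity_apply _ hs, hP,
      setLIntegral_map hs hgm hιm]
    rfl
  have hq0p : IsProbabilityMeasure q0 := ⟨by
    have := congrArg (fun m : Measure (Qc × Qc) => m univ) hmap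
    simpa [Measure.map_apply hιm MeasurableSet.univ] using this⟩
  refine ⟨⟨q0, hq0p⟩, ?_, ?_, ?_⟩
  · apply Subtype.ext
    exact hmap
  · refine map_inj_of_inducing φ hφ _ _ ?_
    have hφm : Measurable φ := hφ.continuous.measurable
    have e1 : (q0.map Prod.fst).map φ = (r : Measure (Qc × Qc)).map Prod.fst := by
      rw [← hmap, Measure.map_map hφm measurable_fst, Measure.map_map measurable_fst hιm]
      rfl
    show (q0.map Prod.fst).map φ = _
    rw [e1]
    have i1 : IsProbabilityMeasure ((r : Measure (Qc × Qc)).map Prod.fst) :=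
      Measure.isProbabilityMeasure_map measurable_fst.aemeasurable
    have i2 : IsProbabilityMeasure ((ρ0 : Measure Ω).map φ) :=
      Measure.isProbabilityMeasure_map hφm.aemeasurable
    refine ext_of_forall_integral_eq_of_IsFiniteMeasure fun f => ?_
    rw [integral_map measurable_fst.aemeasurable f.continuous.measurable.aestronglyMeasurable,
      integral_map hφm.aemeasurable f.continuous.measurable.aestronglyMeasurable]
    set A := ∫ e, f e.1 ∂(r : Measure (Qc × Qc))
    set B := ∫ a, f (φ a) ∂(ρ0 : Measure Ω)
    have key : ∀ t : ℝ, t * A ≤ c + t * B := by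
      intro t
      have h1 := h (t • f.compContinuous ⟨Prod.fst, continuous_fst⟩)
      have h2 : ∫ e, (t • f.compContinuous ⟨Prod.fst, continuous_fst⟩ :
          BoundedContinuousFunction (Qc × Qc) ℝ) e ∂(r : Measure (Qc × Qc)) = t * A :=
        integral_const_mul t _
      have h3 : Lam ζ hζ ρ0 (pull φ hφ (t • f.compContinuous ⟨Prod.fst, continuous_fst⟩)) =
          t * B := by
        unfold Lam
        rw [← integral_const_mul]
        congr 1
        funext a
        rw [logZ_apply]
        have : Zf ζ (pull φ hφ (t • f.compContinuous ⟨Prod.fst, continuous_fst⟩)) a =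
            Real.exp (t * f (φ a)) := by
          have : ∀ y, (pull φ hφ (t • f.compContinuous ⟨Prod.fst, continuous_fst⟩)) (a, y) =
            t * f (φ a) := fun y => rfl
          unfold Zf
          simp_rw [this]
          simp
        rw [this, Real.log_exp]
      rwa [h2, h3] at h1
    by_contra hne
    have hd : A - B ≠ 0 := sub_ne_zero.2 hne
    have := key ((c + 1) / (A - B))
    have h4 : (c + 1) / (A - B) * A - (c + 1) / (A - B) * B = c + 1 := by
      rw [← mul_sub]; field_simp
    linarith
  · have hac2 : q0 ≪ p := withDensity_absolutelyContinuous _ _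
    have hrn : q0.rnDeriv p =ᵐ[p] g ∘ Prod.map φ φ :=
      Measure.rnDeriv_withDensity p (hgm.comp hιm)
    have hrn2 : (fun e => Real.log ((q0.rnDeriv p e).toReal)) =ᵐ[q0]
        (fun e => Real.log ((g e).toReal)) ∘ Prod.map φ φ := by
      filter_upwards [hac2.ae_le hrn] with e he
      simp only [he, Function.comp]
    have hlm : Measurable fun e => Real.log ((g e).toReal) := by fun_prop
    have hint2 : Integrable ((fun e => Real.log ((g e).toReal)) ∘ Prod.map φ φ) q0 := by
      rw [← integrable_map_measure hlm.aestronglyMeasurable hιm.aemeasurable, hmap]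
      exact hint
    show relEntNN q0 p ≤ _
    unfold relEntNN
    rw [if_pos ⟨hac2, (integrable_congr hrn2).2 hint2⟩]
    refine ENNReal.ofReal_le_ofReal ?_
    rw [integral_congr_ae hrn2]
    refine le_trans (le_of_eq ?_) hle
    rw [← hmap, integral_map hιm.aemeasurable hlm.aestronglyMeasurable]
    rfl

/-- the rate functional -/
def Jr (ρ0 : ProbabilityMeasure Ω) (p : Measure (Ω × Ω)) (q : ProbabilityMeasure (Ω × Ω)) : ℝ≥0∞ :=
  if (q : Measure (Ω × Ω)).map Prod.fst = (ρ0 : Measure Ω)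
      then relEntNN (q : Measure (Ω × Ω)) p else ⊤

open ProbabilityTheory in
lemma Jr_good (ζ : Ω → ProbabilityMeasure Ω) (hζ : Continuous ζ) (ρ0 : ProbabilityMeasure Ω)
    (φ : Ω → Qc) (hφ : IsInducing φ) (c : ℝ) (hc : 0 ≤ c) (q : ProbabilityMeasure (Ω × Ω))
    (h : Jr ρ0 ((ρ0 : Measure Ω) ⊗ₘ kap ζ hζ) q ≤ ENNReal.ofReal c) :
    Good ζ hζ ρ0 φ hφ c
      (q.map (f := Prod.map φ φ) (hφ.prodMap hφ).continuous.measurable.aemeasurable) := by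
  unfold Jr at h
  split_ifs at h with h1
  swap
  · simp at h
  intro F
  have := key2 ζ hζ ρ0 q c hc h1 h (pull φ hφ F)
  rw [ProbabilityMeasure.toMeasure_map, integral_map
    (hφ.prodMap hφ).continuous.measurable.aemeasurable
    F.continuous.measurable.aestronglyMeasurable]
  exact this

lemma Good_closed (ζ : Ω → ProbabilityMeasure Ω) (hζ : Continuous ζ) (ρ0 : ProbabilityMeasure Ω)
    (φ : Ω → Qc) (hφ : IsInducing φ) (c : ℝ) : IsClosed {r | Good ζ hζ ρ0 φ hφ c r} := by
  have : {r | Good ζ hζ ρ0 φ hφ c r} = ⋂ F : BoundedContinuousFunction (Qc × Qc) ℝ,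
    {r : ProbabilityMeasure (Qc × Qc) | ∫ e, F e ∂(r : Measure (Qc × Qc)) ≤
      c + Lam ζ hζ ρ0 (pull φ hφ F)} := by
    ext r; simp [Good]
  rw [this]
  exact isClosed_iInter fun F => isClosed_le
    (ProbabilityMeasure.continuous_integral_boundedContinuousFunction F) continuous_const

open ProbabilityTheory in
lemma Jr_compact (ζ : Ω → ProbabilityMeasure Ω) (hζ : Continuous ζ) (ρ0 : ProbabilityMeasure Ω)
    (c : ℝ≥0∞) (hc : c ≠ ⊤) : IsCompact {q | Jr ρ0 ((ρ0 : Measure Ω) ⊗ₘ kap ζ hζ) q ≤ c} := by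
  obtain ⟨φ, hφ⟩ := exists_inducing_cube Ω
  rw [(inducing_map (Prod.map φ φ) (hφ.prodMap hφ)).isCompact_iff]
  have : (fun q : ProbabilityMeasure (Ω × Ω) =>
      q.map (f := Prod.map φ φ) (hφ.prodMap hφ).continuous.measurable.aemeasurable) ''
      {q | Jr ρ0 ((ρ0 : Measure Ω) ⊗ₘ kap ζ hζ) q ≤ c} = {r | Good ζ hζ ρ0 φ hφ c.toReal r} := by
    ext r
    constructor
    · rintro ⟨q, hq, rfl⟩
      exact Jr_good ζ hζ ρ0 φ hφ c.toReal ENNReal.toReal_nonneg q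
        (by rw [ENNReal.ofReal_toReal hc]; exact hq)
    · intro hr
      obtain ⟨q, hq, h1, h2⟩ := key1 ζ hζ ρ0 φ hφ c.toReal r hr
      refine ⟨q, ?_, hq⟩
      rw [ENNReal.ofReal_toReal hc] at h2
      simpa [Jr, h1] using h2
  rw [this]
  exact (Good_closed ζ hζ ρ0 φ hφ _).isCompact

open ProbabilityTheory in
lemma Jr_finite (ζ : Ω → ProbabilityMeasure Ω) (hζ : Continuous ζ) (ρ0 : ProbabilityMeasure Ω) :
    ∃ q, Jr ρ0 ((ρ0 : Measure Ω) ⊗ₘ kap ζ hζ) q ≠ ⊤ := by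
  refine ⟨⟨(ρ0 : Measure Ω) ⊗ₘ kap ζ hζ, inferInstance⟩, ?_⟩
  have h1 : ((ρ0 : Measure Ω) ⊗ₘ kap ζ hζ).map Prod.fst = (ρ0 : Measure Ω) :=
    Measure.fst_compProd _ _
  have h2 := Measure.rnDeriv_self ((ρ0 : Measure Ω) ⊗ₘ kap ζ hζ)
  have h3 : (fun e => Real.log (((((ρ0 : Measure Ω) ⊗ₘ kap ζ hζ).rnDeriv
    ((ρ0 : Measure Ω) ⊗ₘ kap ζ hζ)) e).toReal)) =ᵐ[(ρ0 : Measure Ω) ⊗ₘ kap ζ hζ] fun _ => 0 := by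
    filter_upwards [h2] with e he
    simp [he]
  have h4 : relEntNN ((ρ0 : Measure Ω) ⊗ₘ kap ζ hζ) ((ρ0 : Measure Ω) ⊗ₘ kap ζ hζ) ≠ ⊤ := by
    unfold relEntNN
    rw [if_pos ⟨Measure.AbsolutelyContinuous.rfl, (integrable_congr h3).2 (integrable_zero _ _ _)⟩]
    exact ENNReal.ofReal_ne_top
  intro h5
  exact h4 ((if_pos h1).symm.trans h5)

end

section
variable {Ω : Type*} [MetricSpace Ω] [TopologicalSpace.SeparableSpace Ω]
    [MeasurableSpace Ω] [BorelSpace Ω]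

lemma int_avg {E : Type*} [TopologicalSpace E] [MeasurableSpace E] [BorelSpace E]
    (F : BoundedContinuousFunction E ℝ) (n : ℕ) (z : Fin n → E) :
    ∫ a, F a ∂((n : ℝ≥0∞)⁻¹ • ∑ i : Fin n, Measure.dirac (z i)) = (n : ℝ)⁻¹ * ∑ i, F (z i) := by
  rw [integral_smul_measure, integral_finsetSum_measure]
  · simp [integral_dirac' _ _ F.continuous.stronglyMeasurable]
  · intro i _
    exact F.integrable _

lemma meas_emp (n : ℕ) (x : Fin n → Ω) (emp : (Fin n → Ω) → ProbabilityMeasure (Ω × Ω))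
    (hemp : ∀ y : Fin n → Ω, (emp y : Measure (Ω × Ω)) =
        (n : ℝ≥0∞)⁻¹ • ∑ i : Fin n, Measure.dirac (x i, y i)) : Measurable emp := by
  refine Measurable.subtype_mk (f := fun y => (emp y : Measure (Ω × Ω))) ?_
  refine Measure.measurable_of_measurable_coe _ fun s hs => ?_
  simp_rw [hemp]
  simp only [Measure.smul_apply, Measure.finsetSum_apply, smul_eq_mul]
  refine Measurable.const_mul (Finset.measurable_sum _ fun i _ => ?_) _
  simp_rw [Measure.dirac_apply' _ hs]
  exact (measurable_one.indicator hs).comp (by fun_prop : Measurable fun y : Fin n → Ω => (x i, y i))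

lemma meas_int {E : Type*} [TopologicalSpace E] [MeasurableSpace E] [BorelSpace E]
    (F : BoundedContinuousFunction E ℝ) :
    Measurable fun q : ProbabilityMeasure E => ∫ e, F e ∂(q : Measure E) := by
  have h0 : Measurable fun q : ProbabilityMeasure E => (q : Measure E) := measurable_subtype_coe
  have hF : Measurable F := F.continuous.measurable
  have : (fun q : ProbabilityMeasure E => ∫ e, F e ∂(q : Measure E)) = fun q : ProbabilityMeasure E =>
      (∫⁻ e, ENNReal.ofReal (F e) ∂(q : Measure E)).toReal -
      (∫⁻ e, ENNReal.ofReal (-F e) ∂(q : Measure E)).toReal := by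
    funext q
    exact integral_eq_lintegral_pos_part_sub_lintegral_neg_part (F.integrable _)
  rw [this]
  exact (((Measure.measurable_lintegral (by fun_prop)).comp h0).ennreal_toReal).sub
    (((Measure.measurable_lintegral (by fun_prop)).comp h0).ennreal_toReal)

lemma exp_prod (ζ : Ω → ProbabilityMeasure Ω) (hζ : Continuous ζ)
    (F : BoundedContinuousFunction (Ω × Ω) ℝ) (n : ℕ) (x : Fin n → Ω) :
    ∫⁻ y, ENNReal.ofReal (Real.exp (∑ i, F (x i, y i)))
      ∂(Measure.pi fun i : Fin n => (ζ (x i) : Measure Ω)) =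
    ENNReal.ofReal (Real.exp (∑ i, logZ ζ hζ F (x i))) := by
  simp_rw [Real.exp_sum]
  have h0 : ∀ i (y : Fin n → Ω), 0 ≤ Real.exp (F (x i, y i)) := fun i y => (Real.exp_pos _).le
  rw [← ofReal_integral_eq_lintegral_ofReal]
  · congr 1
    rw [integral_fintype_prod_eq_prod (𝕜 := ℝ) (f := fun i y => Real.exp (F (x i, y)))]
    refine Finset.prod_congr rfl fun i _ => ?_
    rw [logZ_apply, Real.exp_log (Zf_pos ζ F _)]
    rfl
  · refine Integrable.of_bound (by fun_prop :
      Continuous fun y : Fin n → Ω => ∏ i, Real.exp (F (x i, y i))).measurable.aestronglyMeasurable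
      (Real.exp (∑ i : Fin n, ‖F‖)) (Eventually.of_forall fun y => ?_)
    rw [← Real.exp_sum]
    refine abs_exp_le ((Finset.abs_sum_le_sum_abs _ _).trans ?_)
    exact Finset.sum_le_sum fun i _ => abs_le_norm F _
  · exact Eventually.of_forall fun y => Finset.prod_nonneg fun i _ => (Real.exp_pos _).le

lemma cheb (ζ : Ω → ProbabilityMeasure Ω) (hζ : Continuous ζ)
    (F : BoundedContinuousFunction (Ω × Ω) ℝ) (G : Ω × Ω → ℝ) (n : ℕ) (x : Fin n → Ω)
    (B : Set (Fin n → Ω)) (a : ℝ)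
    (h : ∀ y ∈ B, ∑ i, G (x i, y i) ≤ ∑ i, F (x i, y i) - n * a) :
    ∫⁻ y in B, ENNReal.ofReal (Real.exp (∑ i, G (x i, y i)))
      ∂(Measure.pi fun i : Fin n => (ζ (x i) : Measure Ω)) ≤
    ENNReal.ofReal (Real.exp (∑ i, logZ ζ hζ F (x i) - n * a)) := by
  calc _ ≤ ∫⁻ y in B, ENNReal.ofReal (Real.exp (- (n * a))) *
        ENNReal.ofReal (Real.exp (∑ i, F (x i, y i)))
        ∂(Measure.pi fun i : Fin n => (ζ (x i) : Measure Ω)) := by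
        refine setLIntegral_mono (by fun_prop) fun y hy => ?_
        rw [← ENNReal.ofReal_mul (Real.exp_pos _).le, ← Real.exp_add]
        refine ENNReal.ofReal_le_ofReal (Real.exp_le_exp.2 ?_)
        have := h y hy
        linarith
    _ ≤ ∫⁻ y, ENNReal.ofReal (Real.exp (- (n * a))) *
        ENNReal.ofReal (Real.exp (∑ i, F (x i, y i)))
        ∂(Measure.pi fun i : Fin n => (ζ (x i) : Measure Ω)) := setLIntegral_le_lintegral _ _
    _ = _ := by
        rw [lintegral_const_mul _ (by fun_prop), exp_prod ζ hζ,
          ← ENNReal.ofReal_mul (Real.exp_pos _).le, ← Real.exp_add]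
        congr 2
        ring

/-- standing data -/
structure Dat (ζ : Ω → ProbabilityMeasure Ω) (hζ : Continuous ζ) (ρ0 : ProbabilityMeasure Ω)
    (x : (n : ℕ) → Fin n → Ω) (emp : (n : ℕ) → (Fin n → Ω) → ProbabilityMeasure (Ω × Ω))
    (μ : ℕ → Measure (ProbabilityMeasure (Ω × Ω))) : Prop where
  init : ∀ f : BoundedContinuousFunction Ω ℝ,
      Tendsto (fun n : ℕ => (n : ℝ)⁻¹ * ∑ i, f (x n i)) atTop (𝓝 (∫ a, f a ∂(ρ0 : Measure Ω)))
  emp_int : ∀ n : ℕ, 1 ≤ n → ∀ y : Fin n → Ω, ∀ F : BoundedContinuousFunction (Ω × Ω) ℝ,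
      ∫ e, F e ∂(emp n y : Measure (Ω × Ω)) = (n : ℝ)⁻¹ * ∑ i, F (x n i, y i)
  emp_meas : ∀ n : ℕ, 1 ≤ n → Measurable (emp n)
  law : ∀ n : ℕ, μ n = (Measure.pi fun i : Fin n => (ζ (x n i) : Measure Ω)).map (emp n)

lemma Dat.sum_le {ζ : Ω → ProbabilityMeasure Ω} {hζ : Continuous ζ} {ρ0 : ProbabilityMeasure Ω}
    {x : (n : ℕ) → Fin n → Ω} {emp : (n : ℕ) → (Fin n → Ω) → ProbabilityMeasure (Ω × Ω)}
    {μ : ℕ → Measure (ProbabilityMeasure (Ω × Ω))} (D : Dat ζ hζ ρ0 x emp μ)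
    (F : BoundedContinuousFunction (Ω × Ω) ℝ) (ε : ℝ) (hε : 0 < ε) :
    ∀ᶠ n : ℕ in atTop, 1 ≤ n ∧ ∑ i, logZ ζ hζ F (x n i) ≤ n * (Lam ζ hζ ρ0 F + ε) := by
  have h := (D.init (logZ ζ hζ F)).eventually_le_const
    (lt_add_of_pos_right (∫ a, logZ ζ hζ F a ∂(ρ0 : Measure Ω)) hε)
  filter_upwards [h, eventually_ge_atTop 1] with n hn h1
  refine ⟨h1, ?_⟩
  have hn0 : (0 : ℝ) < n := by exact_mod_cast h1
  have := mul_le_mul_of_nonneg_left hn hn0.le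
  rwa [← mul_assoc, mul_inv_cancel₀ hn0.ne', one_mul] at this

lemma Dat.half {ζ : Ω → ProbabilityMeasure Ω} {hζ : Continuous ζ} {ρ0 : ProbabilityMeasure Ω}
    {x : (n : ℕ) → Fin n → Ω} {emp : (n : ℕ) → (Fin n → Ω) → ProbabilityMeasure (Ω × Ω)}
    {μ : ℕ → Measure (ProbabilityMeasure (Ω × Ω))} (D : Dat ζ hζ ρ0 x emp μ)
    (F : BoundedContinuousFunction (Ω × Ω) ℝ) (d d' : ℝ) (hd : d < d') :
    ∀ᶠ n : ℕ in atTop, μ n {q | d' + Lam ζ hζ ρ0 F < ∫ e, F e ∂(q : Measure (Ω × Ω))} ≤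
      ENNReal.ofReal (Real.exp (-(n * d))) := by
  filter_upwards [D.sum_le F (d' - d) (by linarith)] with n hn
  obtain ⟨h1, h2⟩ := hn
  have hn0 : (0 : ℝ) < n := by exact_mod_cast h1
  rw [D.law, Measure.map_apply (D.emp_meas n h1)
    (measurableSet_lt measurable_const (meas_int F))]
  have h3 := cheb ζ hζ F (fun _ => 0) n (x n) (emp n ⁻¹' {q | d' + Lam ζ hζ ρ0 F <
    ∫ e, F e ∂(q : Measure (Ω × Ω))}) (d' + Lam ζ hζ ρ0 F) (by
      intro y hy
      have hy' : d' + Lam ζ hζ ρ0 F < ∫ e, F e ∂(emp n y : Measure (Ω × Ω)) := hy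
      rw [D.emp_int n h1] at hy'
      have := mul_lt_mul_of_pos_left hy' hn0
      rw [← mul_assoc, mul_inv_cancel₀ hn0.ne', one_mul] at this
      simp only [Finset.sum_const_zero]
      linarith)
  simp only [Finset.sum_const_zero, Real.exp_zero, ENNReal.ofReal_one, lintegral_const,
    MeasurableSet.univ, Measure.restrict_apply, univ_inter, one_mul] at h3
  refine h3.trans (ENNReal.ofReal_le_ofReal (Real.exp_le_exp.2 ?_))
  linarith

open ProbabilityTheory in
lemma Dat.upper {ζ : Ω → ProbabilityMeasure Ω} {hζ : Continuous ζ} {ρ0 : ProbabilityMeasure Ω}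
    {x : (n : ℕ) → Fin n → Ω} {emp : (n : ℕ) → (Fin n → Ω) → ProbabilityMeasure (Ω × Ω)}
    {μ : ℕ → Measure (ProbabilityMeasure (Ω × Ω))} (D : Dat ζ hζ ρ0 x emp μ)
    (C : Set (ProbabilityMeasure (Ω × Ω))) (hC : IsClosed C) (d d' : ℝ) (hd : d < d')
    (h : ∀ q ∈ C, ENNReal.ofReal d' < Jr ρ0 ((ρ0 : Measure Ω) ⊗ₘ kap ζ hζ) q) :
    ∀ᶠ n : ℕ in atTop, μ n C ≤ ENNReal.ofReal (Real.exp (-(n * d))) := by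
  obtain ⟨φ, hφ⟩ := exists_inducing_cube Ω
  have hind := inducing_map (Prod.map φ φ) (hφ.prodMap hφ)
  obtain ⟨C', hC', hCC⟩ := hind.isClosed_iff.1 hC
  have hιm := (hφ.prodMap hφ).continuous.measurable
  -- cover
  have hcov : C' ⊆ ⋃ F : BoundedContinuousFunction (Qc × Qc) ℝ,
      {r : ProbabilityMeasure (Qc × Qc) | d' + Lam ζ hζ ρ0 (pull φ hφ F) <
        ∫ e, F e ∂(r : Measure (Qc × Qc))} := by
    intro r hr
    by_contra hcon
    have hg : Good ζ hζ ρ0 φ hφ d' r := by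
      intro F
      by_contra hF
      exact hcon (mem_iUnion.2 ⟨F, not_le.1 hF⟩)
    obtain ⟨q, hq, h1, h2⟩ := key1 ζ hζ ρ0 φ hφ d' r hg
    have hqC : q ∈ C := by
      rw [← hCC]
      exact (congrArg (· ∈ C') hq).mpr hr
    have := h q hqC
    unfold Jr at this
    rw [if_pos h1] at this
    exact absurd this (not_lt.2 h2)
  obtain ⟨t, ht⟩ := hC'.isCompact.elim_finite_subcover _ (fun F => isOpen_lt continuous_const
    (ProbabilityMeasure.continuous_integral_boundedContinuousFunction F)) hcov
  have hsub : C ⊆ ⋃ F ∈ t, {q : ProbabilityMeasure (Ω × Ω) | d' + Lam ζ hζ ρ0 (pull φ hφ F) <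
        ∫ e, pull φ hφ F e ∂(q : Measure (Ω × Ω))} := by
    intro q hq
    rw [← hCC] at hq
    obtain ⟨F, hF⟩ := mem_iUnion.1 (ht hq)
    obtain ⟨hFt, hF⟩ := mem_iUnion.1 hF
    refine mem_iUnion₂.2 ⟨F, hFt, ?_⟩
    have hF' : d' + Lam ζ hζ ρ0 (pull φ hφ F) < ∫ e, F e ∂((q : Measure (Ω × Ω)).map (Prod.map φ φ)) := hF
    rw [integral_map hιm.aemeasurable F.continuous.measurable.aestronglyMeasurable] at hF'
    exact hF'
  obtain ⟨d2, hd1, hd2⟩ := exists_between hd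
  have hall : ∀ᶠ n : ℕ in atTop, ∀ F ∈ t, μ n {q : ProbabilityMeasure (Ω × Ω) |
      d' + Lam ζ hζ ρ0 (pull φ hφ F) < ∫ e, pull φ hφ F e ∂(q : Measure (Ω × Ω))} ≤
      ENNReal.ofReal (Real.exp (-(n * d2))) := by
    rw [Filter.eventually_all_finset]
    intro F _
    exact D.half (pull φ hφ F) d2 d' hd2
  have hN : ∀ᶠ n : ℕ in atTop, (t.card : ℝ) ≤ Real.exp (n * (d2 - d)) :=
    (Real.tendsto_exp_atTop.comp (tendsto_natCast_atTop_atTop.atTop_mul_const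
      (sub_pos.2 hd1))).eventually_ge_atTop _
  filter_upwards [hall, hN] with n h1 h2
  calc μ n C ≤ ∑ F ∈ t, μ n {q : ProbabilityMeasure (Ω × Ω) |
      d' + Lam ζ hζ ρ0 (pull φ hφ F) < ∫ e, pull φ hφ F e ∂(q : Measure (Ω × Ω))} :=
        (measure_mono hsub).trans (measure_biUnion_finset_le _ _)
    _ ≤ ∑ F ∈ t, ENNReal.ofReal (Real.exp (-(n * d2))) := Finset.sum_le_sum h1
    _ = ENNReal.ofReal (t.card * Real.exp (-(n * d2))) := by
        rw [Finset.sum_const, nsmul_eq_mul, ENNReal.ofReal_mul (by positivity)]; simp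
    _ ≤ _ := by
        refine ENNReal.ofReal_le_ofReal ?_
        calc _ ≤ Real.exp (n * (d2 - d)) * Real.exp (-(n * d2)) := by gcongr
          _ = _ := by rw [← Real.exp_add]; congr 1; ring

end

section
variable {Ω : Type*} [MetricSpace Ω] [TopologicalSpace.SeparableSpace Ω]
    [MeasurableSpace Ω] [BorelSpace Ω]

/-- local lower bound -/
def LB {X : Type*} [TopologicalSpace X] [MeasurableSpace X] (μ : ℕ → Measure X) (q : X) (c : ℝ) :
    Prop :=
  ∀ U : Set X, IsOpen U → q ∈ U → ∀ d > c, ∀ᶠ n : ℕ in atTop,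
    ENNReal.ofReal (Real.exp (-(n * d))) ≤ μ n U

lemma LB.lim {X : Type*} [TopologicalSpace X] [MeasurableSpace X] {μ : ℕ → Measure X} {q : X}
    {c : ℝ} (qk : ℕ → X) (ck : ℕ → ℝ) (h : ∀ᶠ k in atTop, LB μ (qk k) (ck k))
    (hq : Tendsto qk atTop (𝓝 q)) (hc : Tendsto ck atTop (𝓝 c)) : LB μ q c := by
  intro U hU hqU d hd
  obtain ⟨k, h1, h2, h3⟩ := (h.and ((hq.eventually (hU.mem_nhds hqU)).and
    (hc.eventually_lt_const hd))).exists
  exact h1 U hU h2 d h3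

open ProbabilityTheory in
lemma Lam_pert (ζ : Ω → ProbabilityMeasure Ω) (hζ : Continuous ζ) (ρ0 : ProbabilityMeasure Ω)
    (G f : BoundedContinuousFunction (Ω × Ω) ℝ) (q : ProbabilityMeasure (Ω × Ω))
    (hq : (q : Measure (Ω × Ω)) = ((ρ0 : Measure Ω) ⊗ₘ kap ζ hζ).withDensity
      (fun e => ENNReal.ofReal (Real.exp (G e)))) (t : ℝ) (ht : |t| * ‖f‖ ≤ 1) :
    Lam ζ hζ ρ0 (G + t • f) ≤ t * ∫ e, f e ∂(q : Measure (Ω × Ω)) + (|t| * ‖f‖) ^ 2 := by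
  set p := (ρ0 : Measure Ω) ⊗ₘ kap ζ hζ with hp
  have hqi : ∀ g : Ω × Ω → ℝ, ∫ e, g e ∂(q : Measure (Ω × Ω)) = ∫ e, Real.exp (G e) * g e ∂p := by
    intro g
    rw [hq, integral_withDensity_eq_integral_toReal_smul
      (by fun_prop : Continuous fun e => Real.exp (G e)).measurable.ennreal_ofReal
      (Eventually.of_forall fun e => ENNReal.ofReal_lt_top)]
    refine integral_congr_ae (Eventually.of_forall fun e => ?_)
    simp [ENNReal.toReal_ofReal (Real.exp_pos _).le]
  have hi : Integrable (fun e => Real.exp ((G + t • f) e)) p := (expB (G + t • f)).integrable _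
  have h1 := Lam_le ζ hζ ρ0 (G + t • f)
  have hpos : 0 < ∫ e, Real.exp ((G + t • f) e) ∂p := integral_exp_pos hi
  have h2 := Real.log_le_sub_one_of_pos hpos
  have h3 : ∀ e, Real.exp ((G + t • f) e) ≤ Real.exp (G e) * (1 + t * f e + (|t| * ‖f‖) ^ 2) := by
    intro e
    have e0 : (G + t • f) e = G e + t * f e := rfl
    rw [e0, Real.exp_add]
    have e1 : |t * f e| ≤ |t| * ‖f‖ := by
      rw [abs_mul]; exact mul_le_mul_of_nonneg_left (abs_le_norm f e) (abs_nonneg _)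
    have e2 := Real.abs_exp_sub_one_sub_id_le (e1.trans ht)
    have e3 : (t * f e) ^ 2 ≤ (|t| * ‖f‖) ^ 2 := by
      rw [← sq_abs]; exact pow_le_pow_left₀ (abs_nonneg _) e1 2
    refine mul_le_mul_of_nonneg_left ?_ (Real.exp_pos _).le
    have := (abs_le.1 e2).2
    linarith
  have hbcf : Integrable (fun e => 1 + t * f e + (|t| * ‖f‖) ^ 2) (q : Measure (Ω × Ω)) :=
    ((integrable_const _).add ((f.integrable _).const_mul _)).add (integrable_const _)
  have hbcp : Integrable (fun e => Real.exp (G e) * (1 + t * f e + (|t| * ‖f‖) ^ 2)) p :=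
    integrable_bdd p (M := Real.exp ‖G‖ * (1 + |t| * ‖f‖ + (|t| * ‖f‖) ^ 2))
      (by fun_prop : Continuous fun e =>
        Real.exp (G e) * (1 + t * f e + (|t| * ‖f‖) ^ 2)).measurable (fun e => by
      rw [abs_mul]
      refine mul_le_mul (abs_exp_le (abs_le_norm G e)) ?_ (abs_nonneg _) (Real.exp_pos _).le
      have e1 : |t * f e| ≤ |t| * ‖f‖ := by
        rw [abs_mul]; exact mul_le_mul_of_nonneg_left (abs_le_norm f e) (abs_nonneg _)
      have e2 := abs_le.1 e1
      have e3 : 0 ≤ |t| * ‖f‖ := by positivity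
      rw [abs_le]
      constructor <;> nlinarith)
  have h4 : ∫ e, Real.exp ((G + t • f) e) ∂p ≤
      1 + t * ∫ e, f e ∂(q : Measure (Ω × Ω)) + (|t| * ‖f‖) ^ 2 := by
    refine (integral_mono hi hbcp h3).trans (le_of_eq ?_)
    have j1 : Integrable (fun e => 1 + t * f e) (q : Measure (Ω × Ω)) :=
      (integrable_const _).add ((f.integrable _).const_mul _)
    rw [← hqi, integral_add j1
      (integrable_const _), integral_add (integrable_const _) ((f.integrable _).const_mul _),
      integral_const_mul]
    simp
  linarith

lemma half_lemma (a P b e : ℝ≥0∞) (hab : a * b = 1) (h1 : 2⁻¹ ≤ a * P) (he : e ≤ b * 2⁻¹) :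
    e ≤ P := by
  calc e ≤ b * 2⁻¹ := he
    _ ≤ b * (a * P) := by gcongr
    _ = P := by rw [← mul_assoc, mul_comm b a, hab, one_mul]

open ProbabilityTheory in
lemma Dat.J0 {ζ : Ω → ProbabilityMeasure Ω} {hζ : Continuous ζ} {ρ0 : ProbabilityMeasure Ω}
    {x : (n : ℕ) → Fin n → Ω} {emp : (n : ℕ) → (Fin n → Ω) → ProbabilityMeasure (Ω × Ω)}
    {μ : ℕ → Measure (ProbabilityMeasure (Ω × Ω))} (D : Dat ζ hζ ρ0 x emp μ)
    (G : BoundedContinuousFunction (Ω × Ω) ℝ) (hG : ∀ a, Zf ζ G a = 1)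
    (q : ProbabilityMeasure (Ω × Ω))
    (hq : (q : Measure (Ω × Ω)) = ((ρ0 : Measure Ω) ⊗ₘ kap ζ hζ).withDensity
      (fun e => ENNReal.ofReal (Real.exp (G e)))) :
    LB μ q (∫ e, G e ∂(q : Measure (Ω × Ω))) := by
  set P : (n : ℕ) → Measure (Fin n → Ω) := fun n =>
    Measure.pi fun i : Fin n => (ζ (x n i) : Measure Ω) with hP
  set dens : (n : ℕ) → (Fin n → Ω) → ℝ≥0∞ := fun n y =>
    ENNReal.ofReal (Real.exp (∑ i, G (x n i, y i))) with hdens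
  set W : (n : ℕ) → Measure (Fin n → Ω) := fun n => (P n).withDensity (dens n) with hW
  have hW1 : ∀ n, W n univ = 1 := by
    intro n
    rw [hW]
    simp only [withDensity_apply _ MeasurableSet.univ, Measure.restrict_univ]
    rw [exp_prod ζ hζ G n (x n)]
    simp [logZ_apply, hG]
  -- claim A
  have claimA : ∀ f : BoundedContinuousFunction (Ω × Ω) ℝ, ∀ δ > 0,
      Tendsto (fun n => W n (emp n ⁻¹' {q' | ∫ e, f e ∂(q : Measure (Ω × Ω)) + δ ≤
        ∫ e, f e ∂(q' : Measure (Ω × Ω))})) atTop (𝓝 0) := by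
    intro f δ hδ
    set m := ∫ e, f e ∂(q : Measure (Ω × Ω)) with hm
    set N := ‖f‖ with hN
    have hN0 : 0 ≤ N := norm_nonneg f
    obtain ⟨t, ht0, ht1, ht2⟩ : ∃ t : ℝ, 0 < t ∧ t * N ≤ 1 ∧ t * N ^ 2 ≤ δ / 2 := by
      refine ⟨min (1 / (N + 1)) (δ / (2 * (N ^ 2 + 1))), by positivity, ?_, ?_⟩
      · calc _ ≤ 1 / (N + 1) * N := by gcongr; exact min_le_left _ _
          _ ≤ 1 := by rw [div_mul_eq_mul_div, div_le_one (by positivity)]; linarith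
      · calc _ ≤ δ / (2 * (N ^ 2 + 1)) * N ^ 2 := by gcongr; exact min_le_right _ _
          _ ≤ δ / 2 := by
            rw [div_mul_eq_mul_div, div_le_div_iff₀ (by positivity) (by positivity)]
            nlinarith
    have hL := Lam_pert ζ hζ ρ0 G f q hq t (by rw [abs_of_pos ht0]; exact ht1)
    rw [abs_of_pos ht0, ← hm, ← hN] at hL
    have hb : ∀ᶠ n : ℕ in atTop, W n (emp n ⁻¹' {q' | m + δ ≤
        ∫ e, f e ∂(q' : Measure (Ω × Ω))}) ≤ ENNReal.ofReal (Real.exp (-(n * (t * δ / 4)))) := by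
      filter_upwards [D.sum_le (G + t • f) (t * δ / 4) (by positivity)] with n hn
      obtain ⟨h1, h2⟩ := hn
      have hn0 : (0 : ℝ) < n := by exact_mod_cast h1
      rw [hW]
      simp only
      rw [withDensity_apply']
      refine (cheb ζ hζ (G + t • f) G n (x n) _ (t * (m + δ)) ?_).trans ?_
      · intro y hy
        have hy' : m + δ ≤ ∫ e, f e ∂(emp n y : Measure (Ω × Ω)) := hy
        rw [D.emp_int n h1] at hy'
        have := mul_le_mul_of_nonneg_left hy' hn0.le
        rw [← mul_assoc, mul_inv_cancel₀ hn0.ne', one_mul] at this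
        have h5 := mul_le_mul_of_nonneg_left this ht0.le
        have h6 : ∑ i, (G + t • f) (x n i, y i) = ∑ i, G (x n i, y i) + t * ∑ i, f (x n i, y i) := by
          rw [Finset.mul_sum, ← Finset.sum_add_distrib]; rfl
        rw [h6]
        linarith
      · refine ENNReal.ofReal_le_ofReal (Real.exp_le_exp.2 ?_)
        have h7 : (t * N) ^ 2 ≤ t * δ / 2 := by nlinarith
        have h8 : Lam ζ hζ ρ0 (G + t • f) + t * δ / 4 - t * (m + δ) ≤ -(t * δ / 4) := by linarith
        nlinarith [mul_le_mul_of_nonneg_left h8 hn0.le]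
    refine tendsto_of_tendsto_of_tendsto_of_le_of_le' tendsto_const_nhds ?_
      (Eventually.of_forall fun n => zero_le) hb
    rw [← ENNReal.ofReal_zero]
    refine ENNReal.tendsto_ofReal (Real.tendsto_exp_neg_atTop_nhds_zero.comp ?_)
    exact tendsto_natCast_atTop_atTop.atTop_mul_const (by positivity)
  -- the filter
  let 𝓖 : Filter (ProbabilityMeasure (Ω × Ω)) := Filter.comk
    (fun s => Tendsto (fun n => W n (emp n ⁻¹' s)) atTop (𝓝 0)) (by simp)
    (fun t ht s hst => tendsto_of_tendsto_of_tendsto_of_le_of_le tendsto_const_nhds ht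
      (fun n => zero_le) (fun n => measure_mono (preimage_mono hst)))
    (fun s hs t ht => tendsto_of_tendsto_of_tendsto_of_le_of_le tendsto_const_nhds
      (by simpa using hs.add ht) (fun n => zero_le) (fun n => by
        rw [preimage_union]; exact measure_union_le _ _))
  have h𝓖 : 𝓖 ≤ 𝓝 q := by
    have : Tendsto (fun r : ProbabilityMeasure (Ω × Ω) => r) 𝓖 (𝓝 q) := by
      rw [ProbabilityMeasure.tendsto_iff_forall_integral_tendsto]
      intro f
      refine tendsto_order.2 ⟨fun a ha => ?_, fun a ha => ?_⟩
      · show Tendsto _ _ _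
        have := claimA (-f) (∫ e, f e ∂(q : Measure (Ω × Ω)) - a) (by linarith)
        simp only [BoundedContinuousFunction.coe_neg, Pi.neg_apply, integral_neg] at this
        convert this using 4
        ext r
        simp only [mem_compl_iff, mem_ofPred_eq, not_lt]
        constructor <;> intro <;> linarith
      · show Tendsto _ _ _
        have := claimA f (a - ∫ e, f e ∂(q : Measure (Ω × Ω))) (by linarith)
        convert this using 4
        ext r
        simp only [mem_compl_iff, mem_ofPred_eq, not_lt]
        constructor <;> intro <;> linarith
    simpa [Tendsto] using this
  intro U hU hqU d hd
  set c := ∫ e, G e ∂(q : Measure (Ω × Ω)) with hc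
  set δ := (d - c) / 2 with hδ
  have hδ0 : 0 < δ := by rw [hδ]; linarith
  set A := U ∩ {q' : ProbabilityMeasure (Ω × Ω) | ∫ e, G e ∂(q' : Measure (Ω × Ω)) < c + δ} with hA
  have hAG : A ∈ 𝓖 := by
    refine h𝓖 (inter_mem (hU.mem_nhds hqU) ?_)
    exact (isOpen_lt (ProbabilityMeasure.continuous_integral_boundedContinuousFunction G)
      continuous_const).mem_nhds (by show c < c + δ; linarith)
  have hAt : Tendsto (fun n => W n (emp n ⁻¹' Aᶜ)) atTop (𝓝 0) := hAG
  have hev := hAt.eventually_le_const (by simp : (0 : ℝ≥0∞) < 2⁻¹)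
  have h2 : ∀ᶠ n : ℕ in atTop, (2 : ℝ) ≤ Real.exp (n * δ) :=
    (Real.tendsto_exp_atTop.comp (tendsto_natCast_atTop_atTop.atTop_mul_const
      hδ0)).eventually_ge_atTop _
  filter_upwards [hev, h2, eventually_ge_atTop 1] with n h3 h4 h5
  have hn0 : (0 : ℝ) < n := by exact_mod_cast h5
  have h6 : 2⁻¹ ≤ W n (emp n ⁻¹' A) := by
    have e1 : 1 ≤ W n (emp n ⁻¹' A) + W n (emp n ⁻¹' Aᶜ) := by
      rw [← hW1 n]
      refine (measure_mono ?_).trans (measure_union_le _ _)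
      rw [← preimage_union, union_compl_self, preimage_univ]
    have e2 : (2⁻¹ : ℝ≥0∞) + 2⁻¹ ≤ W n (emp n ⁻¹' A) + 2⁻¹ := by
      rw [ENNReal.inv_two_add_inv_two]
      exact e1.trans (by gcongr)
    exact (ENNReal.add_le_add_iff_right (by simp)).1 e2
  have h7 : W n (emp n ⁻¹' A) ≤ ENNReal.ofReal (Real.exp (n * (c + δ))) * P n (emp n ⁻¹' A) := by
    rw [hW]
    simp only
    rw [withDensity_apply', ← setLIntegral_const]
    refine setLIntegral_mono measurable_const fun y hy => ?_
    refine ENNReal.ofReal_le_ofReal (Real.exp_le_exp.2 ?_)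
    have hy' : ∫ e, G e ∂(emp n y : Measure (Ω × Ω)) < c + δ := hy.2
    rw [D.emp_int n h5] at hy'
    have := mul_lt_mul_of_pos_left hy' hn0
    rw [← mul_assoc, mul_inv_cancel₀ hn0.ne', one_mul] at this
    exact this.le
  have h8 : P n (emp n ⁻¹' A) ≤ μ n U := by
    rw [D.law]
    exact (measure_mono (preimage_mono inter_subset_left)).trans
      (Measure.le_map_apply (D.emp_meas n h5).aemeasurable U)
  refine le_trans (half_lemma (ENNReal.ofReal (Real.exp (n * (c + δ)))) _
    (ENNReal.ofReal (Real.exp (-(n * (c + δ))))) _ ?_ (h6.trans h7) ?_) h8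
  · rw [← ENNReal.ofReal_mul (Real.exp_pos _).le, ← Real.exp_add]; simp
  · have : (2⁻¹ : ℝ≥0∞) = ENNReal.ofReal 2⁻¹ := by
      rw [ENNReal.ofReal_inv_of_pos (by norm_num)]; simp
    rw [this, ← ENNReal.ofReal_mul (Real.exp_pos _).le]
    refine ENNReal.ofReal_le_ofReal ?_
    have e1 : -(n * d) = -(n * (c + δ)) + -(n * δ) := by rw [hδ]; ring
    rw [e1, Real.exp_add, Real.exp_neg (n * δ)]
    gcongr

end

/-- lower bound for the measure with density `u` -/
def LBd {E : Type*} [TopologicalSpace E] [MeasurableSpace E] [OpensMeasurableSpace E]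
    (μ : ℕ → Measure (ProbabilityMeasure E)) (p : Measure E) (u : E → ℝ) : Prop :=
  ∀ q : ProbabilityMeasure E, (q : Measure E) = p.withDensity (fun e => ENNReal.ofReal (u e)) →
    LB μ q (∫ e, u e * Real.log (u e) ∂p)

lemma int_dens {E : Type*} [MeasurableSpace E] (p : Measure E) (u : E → ℝ) (hu : Measurable u)
    (hu0 : ∀ e, 0 ≤ u e) (f : E → ℝ) :
    ∫ e, f e ∂(p.withDensity (fun e => ENNReal.ofReal (u e))) = ∫ e, u e * f e ∂p := by
  rw [integral_withDensity_eq_integral_toReal_smul hu.ennreal_ofReal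
      (Eventually.of_forall fun e => ENNReal.ofReal_lt_top)]
  refine integral_congr_ae (Eventually.of_forall fun e => ?_)
  simp [ENNReal.toReal_ofReal (hu0 e)]

lemma LBd.lim {E : Type*} [TopologicalSpace E] [MeasurableSpace E] [BorelSpace E]
    {μ : ℕ → Measure (ProbabilityMeasure E)} {p : Measure E} [IsProbabilityMeasure p] {u : E → ℝ}
    (hu : Measurable u) (hu0 : ∀ e, 0 ≤ u e) (uk : ℕ → E → ℝ) (huk : ∀ k, Measurable (uk k))
    (huk0 : ∀ k e, 0 ≤ uk k e) (hone : ∀ k, ∫ e, uk k e ∂p = 1) (B : E → ℝ) (hB : Integrable B p)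
    (hb1 : ∀ k, ∀ᵐ e ∂p, uk k e ≤ B e) (hb2 : ∀ k, ∀ᵐ e ∂p, |uk k e * Real.log (uk k e)| ≤ B e)
    (hlim : ∀ᵐ e ∂p, Tendsto (fun k => uk k e) atTop (𝓝 (u e)))
    (h : ∀ k, LBd μ p (uk k)) : LBd μ p u := by
  intro q hq
  have hint : ∀ k, Integrable (uk k) p := fun k => hB.mono' (huk k).aestronglyMeasurable (by
    filter_upwards [hb1 k] with e he
    rwa [Real.norm_eq_abs, abs_of_nonneg (huk0 k e)])
  have hpk : ∀ k, IsProbabilityMeasure (p.withDensity (fun e => ENNReal.ofReal (uk k e))) :=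
    fun k => ⟨by
      rw [withDensity_apply _ MeasurableSet.univ, Measure.restrict_univ,
        ← ofReal_integral_eq_lintegral_ofReal (hint k) (Eventually.of_forall (huk0 k)), hone k]
      simp⟩
  let qk : ℕ → ProbabilityMeasure E := fun k => ⟨_, hpk k⟩
  refine LB.lim qk (fun k => ∫ e, uk k e * Real.log (uk k e) ∂p)
    (Eventually.of_forall fun k => h k (qk k) rfl) ?_ ?_
  · rw [ProbabilityMeasure.tendsto_iff_forall_integral_tendsto]
    intro f
    have e1 : ∀ k, ∫ e, f e ∂(qk k : Measure E) = ∫ e, uk k e * f e ∂p := fun k =>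
      int_dens p (uk k) (huk k) (huk0 k) f
    rw [hq, int_dens p u hu hu0 f]
    simp_rw [e1]
    refine tendsto_integral_of_dominated_convergence (fun e => B e * ‖f‖)
      (fun k => ((huk k).mul f.continuous.measurable).aestronglyMeasurable) (hB.mul_const _)
      (fun k => ?_) ?_
    · filter_upwards [hb1 k] with e he
      rw [Real.norm_eq_abs, abs_mul, abs_of_nonneg (huk0 k e)]
      exact mul_le_mul he (f.norm_coe_le_norm e) (abs_nonneg _) ((huk0 k e).trans he)
    · filter_upwards [hlim] with e he
      exact he.mul_const _
  · refine tendsto_integral_of_dominated_convergence B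
      (fun k => ((huk k).mul (huk k).log).aestronglyMeasurable) hB
      (fun k => by simpa only [Real.norm_eq_abs] using hb2 k) ?_
    filter_upwards [hlim] with e he
    exact (Real.continuous_mul_log.tendsto (u e)).comp he

section
variable {Ω : Type*} [MetricSpace Ω] [TopologicalSpace.SeparableSpace Ω]
    [MeasurableSpace Ω] [BorelSpace Ω]

open ProbabilityTheory in
lemma int_nrm (ζ : Ω → ProbabilityMeasure Ω) (hζ : Continuous ζ) (ρ0 : ProbabilityMeasure Ω)
    (F : BoundedContinuousFunction (Ω × Ω) ℝ) :
    ∫ e, Real.exp (nrm ζ hζ F e) ∂((ρ0 : Measure Ω) ⊗ₘ kap ζ hζ) = 1 := by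
  have hi : Integrable (fun e => Real.exp (nrm ζ hζ F e)) ((ρ0 : Measure Ω) ⊗ₘ kap ζ hζ) :=
    (expB (nrm ζ hζ F)).integrable _
  rw [Measure.integral_compProd hi]
  have : ∀ a, ∫ y, Real.exp (nrm ζ hζ F (a, y)) ∂(kap ζ hζ a) = 1 := Zf_nrm ζ hζ F
  simp_rw [this]; simp

open ProbabilityTheory in
lemma ae_fst (ζ : Ω → ProbabilityMeasure Ω) (hζ : Continuous ζ) (ρ0 : ProbabilityMeasure Ω)
    {P : Ω → Prop} (h : ∀ᵐ a ∂(ρ0 : Measure Ω), P a) :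
    ∀ᵐ e ∂((ρ0 : Measure Ω) ⊗ₘ kap ζ hζ), P e.1 := by
  have h1 : ((ρ0 : Measure Ω) ⊗ₘ kap ζ hζ).map Prod.fst = (ρ0 : Measure Ω) :=
    Measure.fst_compProd _ _
  rw [← h1] at h
  exact ae_of_ae_map measurable_fst.aemeasurable h

open ProbabilityTheory in
lemma Dat.J1 {ζ : Ω → ProbabilityMeasure Ω} {hζ : Continuous ζ} {ρ0 : ProbabilityMeasure Ω}
    {x : (n : ℕ) → Fin n → Ω} {emp : (n : ℕ) → (Fin n → Ω) → ProbabilityMeasure (Ω × Ω)}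
    {μ : ℕ → Measure (ProbabilityMeasure (Ω × Ω))} (D : Dat ζ hζ ρ0 x emp μ)
    (u : Ω × Ω → ℝ) (hu : Measurable u) (M : ℝ) (hM : 0 ≤ M) (hu1 : ∀ e, Real.exp (-M) ≤ u e)
    (hu2 : ∀ e, u e ≤ Real.exp M) (hone : ∀ᵐ a ∂(ρ0 : Measure Ω), ∫ y, u (a, y) ∂(kap ζ hζ a) = 1) :
    LBd μ ((ρ0 : Measure Ω) ⊗ₘ kap ζ hζ) u := by
  set p := (ρ0 : Measure Ω) ⊗ₘ kap ζ hζ with hp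
  have hupos : ∀ e, 0 < u e := fun e => (Real.exp_pos _).trans_le (hu1 e)
  have hL : ∀ e, |Real.log (u e)| ≤ M := fun e => abs_le.2
    ⟨(Real.le_log_iff_exp_le (hupos e)).2 (hu1 e), (Real.log_le_iff_le_exp (hupos e)).2 (hu2 e)⟩
  obtain ⟨F, hF1, hF2⟩ := approx_bcf p (fun e => Real.log (u e)) hu.log M hL hM
  have hFn : ∀ k, ‖F k‖ ≤ M := fun k => ((F k).norm_le hM).2 (hF1 k)
  have hZ : ∀ᵐ a ∂(ρ0 : Measure Ω), Tendsto (fun k => Zf ζ (F k) a) atTop (𝓝 1) := by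
    filter_upwards [hone, Measure.ae_ae_of_ae_compProd hF2] with a h1 h2
    rw [← h1]
    refine tendsto_integral_of_dominated_convergence (fun _ => Real.exp M)
      (fun k => (by fun_prop : Continuous fun y =>
        Real.exp (F k (a, y))).measurable.aestronglyMeasurable) (integrable_const _)
      (fun k => Eventually.of_forall fun y => abs_exp_le (hF1 k (a, y))) ?_
    filter_upwards [h2] with y hy
    have := (Real.continuous_exp.tendsto _).comp hy
    rwa [Real.exp_log (hupos _)] at this
  have hnb : ∀ k e, |nrm ζ hζ (F k) e| ≤ 2 * M := fun k e => by
    rw [nrm_apply, logZ_apply]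
    have h1 := abs_le.1 (hF1 k e)
    have h2 := abs_le.1 ((log_Zf_bound ζ (F k) e.1).trans (hFn k))
    rw [abs_le]
    constructor <;> linarith
  have hM2 : (0:ℝ) ≤ Real.exp (2 * M) := (Real.exp_pos _).le
  refine LBd.lim hu (fun e => (hupos e).le) (fun k e => Real.exp (nrm ζ hζ (F k) e))
    (fun k => (by fun_prop : Continuous fun e => Real.exp (nrm ζ hζ (F k) e)).measurable)
    (fun k e => (Real.exp_pos _).le) (fun k => int_nrm ζ hζ ρ0 (F k))
    (fun _ => Real.exp (2 * M) * (1 + 2 * M)) (integrable_const _) (fun k => ?_) (fun k => ?_) ?_ ?_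
  · refine Eventually.of_forall fun e => ?_
    have h1 := Real.exp_le_exp.2 (abs_le.1 (hnb k e)).2
    nlinarith
  · refine Eventually.of_forall fun e => ?_
    have h1 := abs_exp_le (hnb k e)
    have h2 := mul_le_mul h1 (hnb k e) (abs_nonneg _) hM2
    rw [Real.log_exp, abs_mul]
    nlinarith
  · filter_upwards [hF2, ae_fst ζ hζ ρ0 hZ] with e h1 h2
    simp_rw [nrm_exp]
    have := ((Real.continuous_exp.tendsto _).comp h1).div h2 one_ne_zero
    rw [Real.exp_log (hupos _), div_one] at this
    exact this
  · intro k q hq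
    have h1 := D.J0 (nrm ζ hζ (F k)) (Zf_nrm ζ hζ (F k)) q hq
    have h2 : ∫ e, nrm ζ hζ (F k) e ∂(q : Measure (Ω × Ω)) =
        ∫ e, Real.exp (nrm ζ hζ (F k) e) * Real.log (Real.exp (nrm ζ hζ (F k) e)) ∂p := by
      rw [hq, int_dens p (fun e => Real.exp (nrm ζ hζ (F k) e))
        (by fun_prop : Continuous fun e => Real.exp (nrm ζ hζ (F k) e)).measurable
        (fun e => (Real.exp_pos _).le)]
      simp_rw [Real.log_exp]
    rwa [h2] at h1

lemma clamp_bound (g k : ℝ) (hk : 0 ≤ k) :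
    |max (Real.exp (-k)) (min g (Real.exp k)) *
      Real.log (max (Real.exp (-k)) (min g (Real.exp k)))| ≤ 1 + |g * Real.log g| := by
  have hmono : ∀ a b : ℝ, 1 ≤ a → a ≤ b → |a * Real.log a| ≤ |b * Real.log b| := by
    intro a b ha hab
    have h1 := Real.log_le_log (by linarith) hab
    have h2 := Real.log_nonneg ha
    rw [abs_of_nonneg (by positivity), abs_of_nonneg (mul_nonneg (by linarith) (h2.trans h1))]
    exact mul_le_mul hab h1 h2 (by linarith)
  have e1 : Real.exp (-k) ≤ 1 := Real.exp_le_one_iff.2 (by linarith)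
  have e2 : 1 ≤ Real.exp k := Real.one_le_exp hk
  have h0 := abs_nonneg (g * Real.log g)
  rcases max_choice (Real.exp (-k)) (min g (Real.exp k)) with h | h
  · rw [h, mul_comm]
    have := Real.abs_log_mul_self_lt _ (Real.exp_pos (-k)) e1
    linarith
  · rw [h]
    rcases min_cases g (Real.exp k) with ⟨h3, h4⟩ | ⟨h3, h4⟩
    · rw [h3]; linarith
    · rw [h3]
      have := hmono _ _ e2 h4.le
      linarith

lemma quot_bound (d Z b : ℝ) (hd : 0 < d) (hZ : 1 / 2 ≤ Z) (hb : |d * Real.log d| ≤ b) :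
    |d / Z * Real.log (d / Z)| ≤ 2 * b + 2 * d := by
  have hZ0 : 0 < Z := by linarith
  have hlog : |Real.log Z| ≤ 2 * Z := by
    rw [abs_le]
    have h1 := Real.log_le_sub_one_of_pos hZ0
    have h2 := Real.one_sub_inv_le_log_of_pos hZ0
    have h3 : Z⁻¹ ≤ 2 := by
      rw [inv_le_comm₀ hZ0 (by norm_num)]; linarith
    constructor <;> linarith
  rw [Real.log_div hd.ne' hZ0.ne']
  have e : d / Z * (Real.log d - Real.log Z) = (d * Real.log d) / Z - d * (Real.log Z / Z) := by
    field_simp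
  rw [e]
  refine (abs_sub _ _).trans (add_le_add ?_ ?_)
  · rw [abs_div, abs_of_pos hZ0, div_le_iff₀ hZ0]
    have := abs_nonneg (d * Real.log d)
    nlinarith
  · rw [abs_mul, abs_of_pos hd, abs_div, abs_of_pos hZ0]
    have : |Real.log Z| / Z ≤ 2 := by rw [div_le_iff₀ hZ0]; exact hlog
    nlinarith

open ProbabilityTheory in
lemma Dat.J2 {ζ : Ω → ProbabilityMeasure Ω} {hζ : Continuous ζ} {ρ0 : ProbabilityMeasure Ω}
    {x : (n : ℕ) → Fin n → Ω} {emp : (n : ℕ) → (Fin n → Ω) → ProbabilityMeasure (Ω × Ω)}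
    {μ : ℕ → Measure (ProbabilityMeasure (Ω × Ω))} (D : Dat ζ hζ ρ0 x emp μ)
    (g : Ω × Ω → ℝ) (hg : Measurable g) (hg0 : ∀ e, 0 ≤ g e)
    (hgi : Integrable g ((ρ0 : Measure Ω) ⊗ₘ kap ζ hζ))
    (hgl : Integrable (fun e => g e * Real.log (g e)) ((ρ0 : Measure Ω) ⊗ₘ kap ζ hζ))
    (hone : ∀ᵐ a ∂(ρ0 : Measure Ω), ∫ y, g (a, y) ∂(kap ζ hζ a) = 1) :
    LBd μ ((ρ0 : Measure Ω) ⊗ₘ kap ζ hζ) g := by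
  set p := (ρ0 : Measure Ω) ⊗ₘ kap ζ hζ with hp
  set Dk : ℕ → Ω × Ω → ℝ := fun k e => max (Real.exp (-(k:ℝ))) (min (g e) (Real.exp k)) with hDk
  have hDm : ∀ k, Measurable (Dk k) := fun k => measurable_const.max (hg.min measurable_const)
  have hDl : ∀ (k : ℕ) e, Real.exp (-(k:ℝ)) ≤ Dk k e := fun k e => le_max_left _ _
  have hD0 : ∀ k e, 0 < Dk k e := fun k e => (Real.exp_pos _).trans_le (hDl k e)
  have hk1 : ∀ k : ℕ, Real.exp (-(k:ℝ)) ≤ 1 := fun k =>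
    Real.exp_le_one_iff.2 (neg_nonpos.2 (Nat.cast_nonneg k))
  have hk2 : ∀ k : ℕ, 1 ≤ Real.exp (k:ℝ) := fun k => Real.one_le_exp (Nat.cast_nonneg k)
  have hDu : ∀ (k : ℕ) e, Dk k e ≤ Real.exp k := fun k e =>
    max_le ((hk1 k).trans (hk2 k)) (min_le_right _ _)
  have hDg : ∀ k e, Dk k e ≤ g e + 1 := fun k e =>
    max_le ((hk1 k).trans (by linarith [hg0 e])) ((min_le_left _ _).trans (by linarith))
  have hDt : ∀ e, Tendsto (fun k => Dk k e) atTop (𝓝 (g e)) := by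
    intro e
    have t1 : Tendsto (fun k : ℕ => Real.exp (-(k:ℝ))) atTop (𝓝 0) :=
      Real.tendsto_exp_neg_atTop_nhds_zero.comp tendsto_natCast_atTop_atTop
    have t2 : Tendsto (fun k : ℕ => min (g e) (Real.exp (k:ℝ))) atTop (𝓝 (g e)) := by
      refine tendsto_const_nhds.congr' ?_
      filter_upwards [(Real.tendsto_exp_atTop.comp
        (tendsto_natCast_atTop_atTop (R := ℝ))).eventually_ge_atTop (g e)] with k hk
      exact (min_eq_left hk).symm
    have := t1.max t2
    rwa [max_eq_right (hg0 e)] at this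
  set Z : ℕ → Ω → ℝ := fun k a => ∫ y, Dk k (a, y) ∂(kap ζ hζ a) with hZd
  have hZm : ∀ k, Measurable (Z k) := fun k =>
    ((hDm k).stronglyMeasurable.integral_kernel_prod_right' (κ := kap ζ hζ)).measurable
  have hDi : ∀ (k : ℕ) a, Integrable (fun y => Dk k (a, y)) (kap ζ hζ a) := fun k a =>
    integrable_bdd _ ((hDm k).comp measurable_prodMk_left) (M := Real.exp k)
      fun y => by rw [abs_of_pos (hD0 _ _)]; exact hDu _ _
  have hZu : ∀ (k : ℕ) a, Z k a ≤ Real.exp k := fun k a => by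
    have := integral_mono (hDi k a) (integrable_const (Real.exp k)) fun y => hDu k (a, y)
    simpa using this
  have hZt : ∀ᵐ a ∂(ρ0 : Measure Ω), Tendsto (fun k => Z k a) atTop (𝓝 1) := by
    filter_upwards [hone] with a h1
    have hga : Integrable (fun y => g (a, y)) (kap ζ hζ a) := by
      by_contra hcon
      rw [integral_undef hcon] at h1
      exact zero_ne_one h1
    rw [← h1]
    refine tendsto_integral_of_dominated_convergence (fun y => g (a, y) + 1)
      (fun k => (hDi k a).aestronglyMeasurable) (hga.add (integrable_const _))
      (fun k => Eventually.of_forall fun y => ?_) (Eventually.of_forall fun y => hDt _)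
    rw [Real.norm_eq_abs, abs_of_pos (hD0 _ _)]; exact hDg _ _
  set uk : ℕ → Ω × Ω → ℝ := fun k e => if 1 / 2 ≤ Z k e.1 then Dk k e / Z k e.1 else 1 with huk
  have hukm : ∀ k, Measurable (uk k) := fun k =>
    Measurable.ite (measurableSet_le measurable_const ((hZm k).comp measurable_fst))
      ((hDm k).div ((hZm k).comp measurable_fst)) measurable_const
  have hukl : ∀ (k : ℕ) e, Real.exp (-(2 * k + 1 : ℝ)) ≤ uk k e := by
    intro k e
    simp only [huk]
    split_ifs with h
    · rw [le_div_iff₀ (by linarith)]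
      calc _ ≤ Real.exp (-(2 * k + 1 : ℝ)) * Real.exp k := by gcongr; exact hZu k e.1
        _ ≤ Real.exp (-(k:ℝ)) := by
          rw [← Real.exp_add]; exact Real.exp_le_exp.2 (by linarith)
        _ ≤ _ := hDl k e
    · exact Real.exp_le_one_iff.2 (neg_nonpos.2 (by positivity))
  have huku : ∀ (k : ℕ) e, uk k e ≤ Real.exp (2 * k + 1 : ℝ) := by
    intro k e
    simp only [huk]
    split_ifs with h
    · rw [div_le_iff₀ (by linarith)]
      have h2 : (2 : ℝ) ≤ Real.exp 1 := by have := Real.add_one_le_exp (1:ℝ); linarith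
      calc _ ≤ Real.exp k := hDu k e
        _ ≤ Real.exp (2 * k) * 2 * (1 / 2) := by
            have : Real.exp (k:ℝ) ≤ Real.exp (2 * k : ℝ) :=
              Real.exp_le_exp.2 (by have : (0:ℝ) ≤ k := Nat.cast_nonneg k; linarith)
            linarith
        _ ≤ Real.exp (2 * k) * Real.exp 1 * Z k e.1 := by gcongr
        _ = _ := by rw [← Real.exp_add]
    · exact Real.one_le_exp (by positivity)
  have huk0 : ∀ k e, 0 ≤ uk k e := fun k e => (Real.exp_pos _).le.trans (hukl k e)
  have hukone : ∀ k a, ∫ y, uk k (a, y) ∂(kap ζ hζ a) = 1 := by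
    intro k a
    by_cases h : 1 / 2 ≤ Z k a
    · have : ∀ y, uk k (a, y) = Dk k (a, y) / Z k a := fun y => if_pos h
      simp_rw [this]
      rw [integral_div]
      exact div_self (by linarith)
    · have : ∀ y, uk k (a, y) = 1 := fun y => if_neg h
      simp_rw [this]
      simp
  have huki : ∀ k, Integrable (uk k) p := fun k =>
    integrable_bdd p (hukm k) (M := Real.exp (2 * k + 1 : ℝ)) fun e => by
      rw [abs_of_nonneg (huk0 k e)]; exact huku k e
  refine LBd.lim hg hg0 uk hukm huk0 (fun k => ?_)
    (fun e => 4 + 2 * g e + 2 * |g e * Real.log (g e)|)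
    (((integrable_const _).add (hgi.const_mul 2)).add (hgl.abs.const_mul 2))
    (fun k => Eventually.of_forall fun e => ?_) (fun k => Eventually.of_forall fun e => ?_) ?_
    (fun k => D.J1 (uk k) (hukm k) (2 * k + 1 : ℝ) (by positivity) (hukl k) (huku k)
      (Eventually.of_forall (hukone k)))
  · rw [Measure.integral_compProd (huki k)]
    simp_rw [hukone]; simp
  · have a1 := abs_nonneg (g e * Real.log (g e))
    have a2 := hg0 e
    simp only [huk]
    split_ifs with h
    · rw [div_le_iff₀ (by linarith)]
      have := hDg k e
      nlinarith
    · linarith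
  · have a1 := abs_nonneg (g e * Real.log (g e))
    have a2 := hg0 e
    simp only [huk]
    split_ifs with h
    · have b1 := quot_bound _ _ _ (hD0 k e) h (clamp_bound (g e) k (Nat.cast_nonneg k))
      have := hDg k e
      linarith
    · simp only [Real.log_one, mul_zero, abs_zero]; linarith
  · filter_upwards [ae_fst ζ hζ ρ0 hZt] with e he
    have t1 := (hDt e).div he one_ne_zero
    rw [div_one] at t1
    refine t1.congr' ?_
    filter_upwards [he.eventually_const_le (by norm_num : (1/2 : ℝ) < 1)] with k hk
    exact (if_pos hk).symm

open ProbabilityTheory in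
lemma Dat.lower {ζ : Ω → ProbabilityMeasure Ω} {hζ : Continuous ζ} {ρ0 : ProbabilityMeasure Ω}
    {x : (n : ℕ) → Fin n → Ω} {emp : (n : ℕ) → (Fin n → Ω) → ProbabilityMeasure (Ω × Ω)}
    {μ : ℕ → Measure (ProbabilityMeasure (Ω × Ω))} (D : Dat ζ hζ ρ0 x emp μ)
    (q : ProbabilityMeasure (Ω × Ω)) (hq : (q : Measure (Ω × Ω)).map Prod.fst = (ρ0 : Measure Ω))
    (hac : (q : Measure (Ω × Ω)) ≪ (ρ0 : Measure Ω) ⊗ₘ kap ζ hζ)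
    (hi : Integrable (fun e => Real.log
      (((q : Measure (Ω × Ω)).rnDeriv ((ρ0 : Measure Ω) ⊗ₘ kap ζ hζ) e).toReal)) (q : Measure (Ω × Ω))) :
    LB μ q (∫ e, Real.log
      (((q : Measure (Ω × Ω)).rnDeriv ((ρ0 : Measure Ω) ⊗ₘ kap ζ hζ) e).toReal)
        ∂(q : Measure (Ω × Ω))) := by
  set p := (ρ0 : Measure Ω) ⊗ₘ kap ζ hζ with hp
  set g : Ω × Ω → ℝ := fun e => ((q : Measure (Ω × Ω)).rnDeriv p e).toReal with hg
  have hgm : Measurable g := (Measure.measurable_rnDeriv _ _).ennreal_toReal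
  have hg0 : ∀ e, 0 ≤ g e := fun e => ENNReal.toReal_nonneg
  have hqd : (q : Measure (Ω × Ω)) = p.withDensity (fun e => ENNReal.ofReal (g e)) := by
    conv_lhs => rw [← Measure.withDensity_rnDeriv_eq _ _ hac]
    refine withDensity_congr_ae ?_
    filter_upwards [Measure.rnDeriv_lt_top (q : Measure (Ω × Ω)) p] with e he
    rw [hg, ENNReal.ofReal_toReal he.ne]
  have hcost : ∫ e, Real.log (g e) ∂(q : Measure (Ω × Ω)) = ∫ e, g e * Real.log (g e) ∂p :=
    (integral_rnDeriv_smul hac).symm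
  rw [hcost]
  refine D.J2 g hgm hg0 Measure.integrable_toReal_rnDeriv ((integrable_rnDeriv_smul_iff hac).2 hi) ?_
    q hqd
  have hlm : Measurable fun e => ENNReal.ofReal (g e) := hgm.ennreal_ofReal
  have hae : (fun a => ∫⁻ y, ENNReal.ofReal (g (a, y)) ∂(kap ζ hζ a)) =ᵐ[(ρ0 : Measure Ω)]
      fun _ => 1 := by
    refine ae_eq_of_forall_setLIntegral_eq_of_sigmaFinite
      (hlm.lintegral_kernel_prod_right' (κ := kap ζ hζ)) measurable_const fun s hs _ => ?_
    have h1 := Measure.setLIntegral_compProd (μ := (ρ0 : Measure Ω)) (κ := kap ζ hζ) hlm hs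
      MeasurableSet.univ
    simp only [Measure.restrict_univ] at h1
    rw [← h1, setLIntegral_one, ← withDensity_apply _ (hs.prod MeasurableSet.univ), ← hp, ← hqd,
      ← hq, Measure.map_apply measurable_fst hs, prod_univ]
  filter_upwards [hae] with a ha
  rw [integral_eq_lintegral_of_nonneg_ae (Eventually.of_forall fun y => hg0 _)
    (hgm.comp measurable_prodMk_left).aestronglyMeasurable, ha]
  simp

end

lemma log_le_aux (n : ℕ) (hn : 1 ≤ n) (m : ℝ≥0∞) (b : ℝ)
    (h : m ≤ ENNReal.ofReal (Real.exp (-(n * (-b))))) :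
    (((n : ℝ)⁻¹ : ℝ) : EReal) * ENNReal.log m ≤ (b : EReal) := by
  have hn0 : (0 : ℝ) < n := by exact_mod_cast hn
  have h1 := ENNReal.log_monotone h
  rw [ENNReal.log_ofReal_of_pos (Real.exp_pos _), Real.log_exp] at h1
  have h2 := mul_le_mul_of_nonneg_left h1
    (EReal.coe_nonneg.2 (inv_nonneg.2 hn0.le) : (0 : EReal) ≤ (((n : ℝ)⁻¹ : ℝ) : EReal))
  refine h2.trans (le_of_eq ?_)
  rw [← EReal.coe_mul]
  congr 1
  field_simp

lemma le_log_aux (n : ℕ) (hn : 1 ≤ n) (m : ℝ≥0∞) (b : ℝ)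
    (h : ENNReal.ofReal (Real.exp (-(n * (-b)))) ≤ m) :
    (b : EReal) ≤ (((n : ℝ)⁻¹ : ℝ) : EReal) * ENNReal.log m := by
  have hn0 : (0 : ℝ) < n := by exact_mod_cast hn
  have h1 := ENNReal.log_monotone h
  rw [ENNReal.log_ofReal_of_pos (Real.exp_pos _), Real.log_exp] at h1
  have h2 := mul_le_mul_of_nonneg_left h1
    (EReal.coe_nonneg.2 (inv_nonneg.2 hn0.le) : (0 : EReal) ≤ (((n : ℝ)⁻¹ : ℝ) : EReal))
  refine le_trans (le_of_eq ?_) h2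
  rw [← EReal.coe_mul]
  congr 1
  field_simp

open ProbabilityTheory in
lemma Dat.ldp {Ω : Type*} [MetricSpace Ω] [TopologicalSpace.SeparableSpace Ω]
    [MeasurableSpace Ω] [BorelSpace Ω]
    {ζ : Ω → ProbabilityMeasure Ω} {hζ : Continuous ζ} {ρ0 : ProbabilityMeasure Ω}
    {x : (n : ℕ) → Fin n → Ω} {emp : (n : ℕ) → (Fin n → Ω) → ProbabilityMeasure (Ω × Ω)}
    {μ : ℕ → Measure (ProbabilityMeasure (Ω × Ω))} (D : Dat ζ hζ ρ0 x emp μ) :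
    IsLDP μ (Jr ρ0 ((ρ0 : Measure Ω) ⊗ₘ kap ζ hζ)) := by
  refine ⟨⟨Jr_finite ζ hζ ρ0, Jr_compact ζ hζ ρ0⟩, fun U hU => ?_, fun C hC => ?_⟩
  · by_contra hcon
    obtain ⟨b, hb1, hb2⟩ := EReal.lt_iff_exists_real_btwn.1 (not_le.1 hcon)
    refine absurd hb1 (not_lt.2 ?_)
    have hI : (((⨅ q ∈ U, Jr ρ0 ((ρ0 : Measure Ω) ⊗ₘ kap ζ hζ) q : ℝ≥0∞)) : EReal) <
        ((-b : ℝ) : EReal) := by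
      have := EReal.neg_lt_neg_iff.2 hb2
      rwa [neg_neg, ← EReal.coe_neg] at this
    have hd0 : 0 < -b := by
      have := (EReal.coe_ennreal_nonneg _).trans_lt hI
      exact_mod_cast this
    have hI2 : (⨅ q ∈ U, Jr ρ0 ((ρ0 : Measure Ω) ⊗ₘ kap ζ hζ) q) < ENNReal.ofReal (-b) := by
      rw [← EReal.coe_ennreal_lt_coe_ennreal_iff, EReal.coe_ennreal_ofReal,
        max_eq_left hd0.le]
      exact hI
    obtain ⟨q, hq⟩ := iInf_lt_iff.1 hI2
    obtain ⟨hqU, hq⟩ := iInf_lt_iff.1 hq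
    unfold Jr relEntNN at hq
    split_ifs at hq with h1 h2
    · rw [ENNReal.ofReal_lt_ofReal_iff hd0] at hq
      have := D.lower q h1 h2.1 h2.2 U hU hqU (-b) hq
      refine le_liminf_of_le (by isBoundedDefault) ?_
      filter_upwards [this, eventually_ge_atTop 1] with n h3 h4
      exact le_log_aux n h4 _ b h3
    · simp at hq
    · simp at hq
  · by_contra hcon
    obtain ⟨b, hb1, hb2⟩ := EReal.lt_iff_exists_real_btwn.1 (not_le.1 hcon)
    refine absurd hb2 (not_lt.2 ?_)
    refine limsup_le_of_le (by isBoundedDefault) ?_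
    rcases le_or_gt 0 b with hb | hb
    · filter_upwards [eventually_ge_atTop 1] with n hn
      refine log_le_aux n hn _ b (le_trans (b := 1) ?_ ?_)
      · have : IsProbabilityMeasure (μ n) := by
          rw [D.law]
          exact Measure.isProbabilityMeasure_map (D.emp_meas n hn).aemeasurable
        exact prob_le_one
      · rw [ENNReal.one_le_ofReal]
        refine Real.one_le_exp ?_
        have : (0 : ℝ) ≤ n := Nat.cast_nonneg n
        nlinarith
    · have hI : ((-b : ℝ) : EReal) <
          (((⨅ q ∈ C, Jr ρ0 ((ρ0 : Measure Ω) ⊗ₘ kap ζ hζ) q : ℝ≥0∞)) : EReal) := by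
        have := EReal.neg_lt_neg_iff.2 hb1
        rwa [neg_neg, ← EReal.coe_neg] at this
      obtain ⟨d, hd1, hd2⟩ := EReal.lt_iff_exists_real_btwn.1 hI
      have hd1' : -b < d := by exact_mod_cast hd1
      have hI2 : ENNReal.ofReal d < ⨅ q ∈ C, Jr ρ0 ((ρ0 : Measure Ω) ⊗ₘ kap ζ hζ) q := by
        rw [← EReal.coe_ennreal_lt_coe_ennreal_iff, EReal.coe_ennreal_ofReal,
          max_eq_left (by linarith)]
        exact hd2
      have := D.upper C hC (-b) d hd1' fun q hq => hI2.trans_le (iInf₂_le q hq)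
      filter_upwards [this, eventually_ge_atTop 1] with n h3 h4
      exact log_le_aux n h4 _ b h3

/-- the quenched large-deviation principle for the pair empirical
measures `M_n = n⁻¹ Σ δ_{(x_i, Y_i)}` of independent particles with
deterministic initial positions `x_i` (whose empirical measures converge
narrowly to `ρ⁰`) and narrowly continuous transition kernel `ζ`, with rate
functional `I(q) = H(q|p)` if `π¹q = ρ⁰` and `+∞` otherwise, where
`p(dx dy) = ρ⁰(dx) ζ^x(dy)`. -/
theorem stmt16 (Ω : Type*) [MetricSpace Ω] [TopologicalSpace.SeparableSpace Ω]
    [MeasurableSpace Ω] [BorelSpace Ω]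
    -- every Borel probability measure on Ω is Radon (inner regular):
    (hRadon : ∀ μ : Measure Ω, IsProbabilityMeasure μ → μ.InnerRegular)
    (ρ0 : ProbabilityMeasure Ω)
    (x : (n : ℕ) → Fin n → Ω)
    -- narrow convergence of the initial empirical measures to ρ⁰:
    (hinit : ∀ f : BoundedContinuousFunction Ω ℝ,
      Tendsto (fun n : ℕ =>
          ∫ a, f a ∂((n : ℝ≥0∞)⁻¹ • ∑ i : Fin n, Measure.dirac (x n i)))
        atTop (𝓝 (∫ a, f a ∂(ρ0 : Measure Ω))))
    (ζ : Ω → ProbabilityMeasure Ω) (hζ : Continuous ζ)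
    -- the pair empirical measure map:
    (emp : (n : ℕ) → (Fin n → Ω) → ProbabilityMeasure (Ω × Ω))
    (hemp : ∀ n : ℕ, 1 ≤ n → ∀ y : Fin n → Ω,
      (emp n y : Measure (Ω × Ω)) =
        (n : ℝ≥0∞)⁻¹ • ∑ i : Fin n, Measure.dirac (x n i, y i))
    -- the law of M_n (the particles Y_i are independent with Y_i ~ ζ^{x_i}):
    (μ : ℕ → Measure (ProbabilityMeasure (Ω × Ω)))
    (hμ : ∀ n : ℕ, μ n =
      (Measure.pi fun i : Fin n => (ζ (x n i) : Measure Ω)).map (emp n))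
    -- the reference measure p(dx dy) = ρ⁰(dx) ζ^x(dy):
    (p : Measure (Ω × Ω))
    (hp : p = (ρ0 : Measure Ω).bind fun a => ((ζ a : Measure Ω)).map (Prod.mk a)) :
    IsLDP μ (fun q : ProbabilityMeasure (Ω × Ω) =>
      if (q : Measure (Ω × Ω)).map Prod.fst = (ρ0 : Measure Ω)
      then relEntNN (q : Measure (Ω × Ω)) p else ⊤) := by
  have hi : ∀ f : BoundedContinuousFunction Ω ℝ,
      Tendsto (fun n : ℕ => (n : ℝ)⁻¹ * ∑ i, f (x n i)) atTop
        (𝓝 (∫ a, f a ∂(ρ0 : Measure Ω))) := fun f =>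
    (hinit f).congr fun n => int_avg f n (x n)
  have D : Dat ζ hζ ρ0 x emp μ :=
    { init := hi
      emp_int := fun n hn y F => by
        rw [hemp n hn y]; exact int_avg F n fun i => (x n i, y i)
      emp_meas := fun n hn => meas_emp n (x n) (emp n) (hemp n hn)
      law := hμ }
  have hp2 := hp.trans (bind_eq ζ hζ ρ0)
  subst hp2
  exact D.ldp

end
end
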